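/- Let X be the punctured Möbius band with boundary circles C₁ and C₂. If f : X → X is a boundary-preserving map such that both restrictions f|C₁ : C₁ → ∂X and f|C₂ : C₂ → ∂X are inessential and f(∂X) is contained in a single boundary circle (that is, f(∂X) ⊆ C₁ or f(∂X) ⊆ C₂), then f is boundary-homotopic to a map g : X → X having exactly one fixed point. -/

import Mathlib

open Set

namespace PMB


/-- The square [0,1] × [−1,1] as a subspace of ℝ². -/
def Sq : Set (ℝ × ℝ) := Set.Icc 0 1 ×ˢ Set.Icc (-1) 1

/-- The identification (0,y) ∼ (1,−y) on the square. -/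
def rel (p q : Sq) : Prop :=
  (p : ℝ × ℝ) = (q : ℝ × ℝ) ∨
  ((p : ℝ × ℝ).1 = 0 ∧ (q : ℝ × ℝ).1 = 1 ∧ (p : ℝ × ℝ).2 = -(q : ℝ × ℝ).2) ∨
  ((p : ℝ × ℝ).1 = 1 ∧ (q : ℝ × ℝ).1 = 0 ∧ (q : ℝ × ℝ).2 = -(p : ℝ × ℝ).2)

/-- The Möbius band: the quotient of the square by the identification. -/
def M := Quot rel

instance : TopologicalSpace M := inferInstanceAs (TopologicalSpace (Quot rel))

/-- The quotient map. -/
def qm : Sq → M := Quot.mk rel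

/-- The open disc of radius 1/4 centred at (1/2, 0). -/
def Bdisc : Set (ℝ × ℝ) := Metric.ball (1/2, 0) (1/4)

/-- The circle of radius 1/4 centred at (1/2, 0). -/
def Scirc : Set (ℝ × ℝ) := Metric.sphere (1/2, 0) (1/4)

/-- The punctured Möbius band, as a subset of the Möbius band. -/
def Xset : Set M := {m | m ∉ qm '' {p : Sq | (p : ℝ × ℝ) ∈ Bdisc}}

/-- The punctured Möbius band as a topological space. -/
abbrev X : Type := ↥Xset

/-- The boundary circle of the Möbius band. -/
def C1 : Set X := {x | ∃ p : Sq, qm p = (x : M) ∧ ((p : ℝ × ℝ).2 = 1 ∨ (p : ℝ × ℝ).2 = -1)}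

/-- The boundary circle coming from the removed disc. -/
def C2 : Set X := {x | ∃ p : Sq, qm p = (x : M) ∧ (p : ℝ × ℝ) ∈ Scirc}

/-- The boundary of the punctured Möbius band. -/
def Bd : Set X := C1 ∪ C2

/-- A self-map of the punctured Möbius band is boundary-preserving if it sends ∂X into ∂X. -/
def BoundaryPreserving (f : C(X, X)) : Prop := MapsTo f Bd Bd

/-- Two self-maps are boundary-homotopic if there is a homotopy between them keeping
∂X inside ∂X at all times. -/
def BoundaryHomotopic (f g : C(X, X)) : Prop :=
  ∃ H : ContinuousMap.Homotopy f g, ∀ x : X, x ∈ Bd → ∀ t : unitInterval, H (t, x) ∈ Bd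

/-- A continuous map is inessential if it is homotopic to a constant map. -/
def Inessential {α β : Type*} [TopologicalSpace α] [TopologicalSpace β] (f : C(α, β)) : Prop :=
  ∃ b : β, ContinuousMap.Homotopic f (ContinuousMap.const α b)

/-- A continuous map is essential if it is not homotopic to a constant map. -/
def Essential {α β : Type*} [TopologicalSpace α] [TopologicalSpace β] (f : C(α, β)) : Prop :=
  ¬ Inessential f

/-- The restriction of a self-map of X to a subset `s` mapped into a subset `t`,
as a continuous map between the subspaces. -/
def restrictMap (f : C(X, X)) {s t : Set X} (h : MapsTo f s t) : C(s, t) :=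
  ⟨fun x => ⟨f x, h x.2⟩, Continuous.subtype_mk (f.continuous.comp continuous_subtype_val) _⟩

/-! ### Part 1: coordinates -/

/-- The sup-norm distance to the centre of the hole. -/
noncomputable def Nf (p : ℝ × ℝ) : ℝ := max |p.1 - 1/2| |p.2|

lemma Nf_cont : Continuous Nf := by unfold Nf; fun_prop

lemma Nf_glue (y : ℝ) : Nf (0, y) = Nf (1, -y) := by
  unfold Nf; norm_num [abs_neg]

lemma mem_Bdisc (p : ℝ × ℝ) : p ∈ Bdisc ↔ Nf p < 1/4 := by
  simp [Bdisc, Metric.mem_ball, Prod.dist_eq, Real.dist_eq, Nf]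

lemma mem_Scirc (p : ℝ × ℝ) : p ∈ Scirc ↔ Nf p = 1/4 := by
  rw [Scirc, Metric.mem_sphere, Prod.dist_eq, Real.dist_eq, Real.dist_eq, Nf, sub_zero]

/-- Descend a function on the square to the Möbius band. -/
def liftM {Z : Type*} (φ : ℝ × ℝ → Z) (h : ∀ y, -1 ≤ y → y ≤ 1 → φ (0, y) = φ (1, -y)) (m : M) : Z :=
  Quot.lift (fun p : Sq => φ p) (by
    rintro ⟨⟨a, b⟩, hab⟩ ⟨⟨c, d⟩, hcd⟩ hr
    simp only [Sq, mem_prod, mem_Icc] at hab hcd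
    rcases hr with hr | ⟨h1, h2, h3⟩ | ⟨h1, h2, h3⟩
    · exact congrArg φ hr
    · simp only at h1 h2 h3 ⊢
      subst h1 h2 h3
      have := h (-d) hab.2.1 hab.2.2
      rwa [neg_neg] at this
    · simp only at h1 h2 h3 ⊢
      subst h1 h2 h3
      have := h (-b) hcd.2.1 hcd.2.2
      rw [neg_neg] at this
      exact this.symm) m

lemma liftM_qm {Z : Type*} (φ : ℝ × ℝ → Z) (h) (p : Sq) : liftM φ h (qm p) = φ p := rfl

lemma qm_quot : Topology.IsQuotientMap qm := isQuotientMap_quot_mk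

lemma liftM_cont {Z : Type*} [TopologicalSpace Z] (φ : ℝ × ℝ → Z) (h) (hc : ContinuousOn φ Sq) :
    Continuous (liftM φ h) := by
  rw [qm_quot.continuous_iff]
  exact continuousOn_iff_continuous_domRestrict.1 hc

lemma qm_surj (m : M) : ∃ p, qm p = m := qm_quot.surjective m

noncomputable def NM : M → ℝ := liftM Nf (fun y _ _ => Nf_glue y)

lemma NM_cont : Continuous NM := liftM_cont _ _ Nf_cont.continuousOn

lemma mem_Xset (m : M) : m ∈ Xset ↔ 1/4 ≤ NM m := by
  obtain ⟨p, rfl⟩ := qm_surj m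
  simp only [Xset, mem_ofPred_eq, mem_image, not_exists, not_and]
  constructor
  · intro h
    by_contra hc
    push Not at hc
    exact h p ((mem_Bdisc p).2 hc) rfl
  · intro h q hq he
    have : NM (qm q) < 1/4 := (mem_Bdisc q).1 hq
    rw [he] at this
    linarith

/-- The square with a hole. -/
def Dset : Set (ℝ × ℝ) := {p | (0 ≤ p.1 ∧ p.1 ≤ 1) ∧ (-1 ≤ p.2 ∧ p.2 ≤ 1) ∧ 1/4 ≤ Nf p}

lemma Dset_sub {p} (h : p ∈ Dset) : p ∈ Sq := ⟨h.1, h.2.1⟩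

def qD (p : Dset) : X := ⟨qm ⟨p, Dset_sub p.2⟩, (mem_Xset _).2 p.2.2.2⟩

lemma qD_cont : Continuous qD := by
  refine Continuous.subtype_mk (qm_quot.continuous.comp ?_) _
  exact continuous_subtype_val.subtype_mk _

lemma qD_surj : Function.Surjective qD := by
  rintro ⟨m, hm⟩
  obtain ⟨⟨p, hp⟩, rfl⟩ := qm_surj m
  exact ⟨⟨p, hp.1, hp.2, (mem_Xset _).1 hm⟩, rfl⟩

lemma qD_quot : Topology.IsQuotientMap qD := by
  rw [Topology.isQuotientMap_iff_isClosed]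
  refine ⟨qD_surj, fun A => ⟨fun h => h.preimage qD_cont, fun h => ?_⟩⟩
  have hD : IsClosed Dset := by
    unfold Dset
    have := Nf_cont
    simp only [ofPred_and]
    refine (IsClosed.inter ?_ ?_).inter ((IsClosed.inter ?_ ?_).inter ?_)
    all_goals exact isClosed_le (by fun_prop) (by fun_prop)
  have h2 : IsClosed ((Subtype.val : X → M) '' A) := by
    rw [← qm_quot.isClosed_preimage]
    have h3 : IsClosed ((Subtype.val : Dset → ℝ × ℝ) '' (qD ⁻¹' A)) :=
      hD.isClosedEmbedding_subtypeVal.isClosedMap _ h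
    convert h3.preimage (continuous_subtype_val : Continuous (Subtype.val : Sq → ℝ × ℝ)) using 1
    ext ⟨p, hp⟩
    simp only [mem_preimage, mem_image, Subtype.exists, exists_and_right, exists_eq_right]
    constructor
    · rintro ⟨x, hx⟩
      exact ⟨⟨hp.1, hp.2, (mem_Xset _).1 x⟩, hx⟩
    · rintro ⟨x, hx⟩
      exact ⟨(mem_Xset _).2 x.2.2, hx⟩
  convert h2.preimage (continuous_subtype_val : Continuous (Subtype.val : X → M)) using 1
  exact (preimage_image_eq _ Subtype.val_injective).symm

lemma base_mem : ((0, 0) : ℝ × ℝ) ∈ Dset := by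
  refine ⟨by norm_num, by norm_num, ?_⟩
  unfold Nf
  exact le_max_of_le_left (by rw [abs_of_nonpos] <;> norm_num)

open Classical in
/-- Total version of the quotient map onto `X`. -/
noncomputable def toX (p : ℝ × ℝ) : X := if h : p ∈ Dset then qD ⟨p, h⟩ else qD ⟨(0, 0), base_mem⟩

lemma toX_mem {p} (h : p ∈ Dset) : toX p = qD ⟨p, h⟩ := dif_pos h

lemma toX_cont : ContinuousOn toX Dset := by
  rw [continuousOn_iff_continuous_domRestrict]
  refine qD_cont.congr fun p => ?_
  simp [toX_mem p.2]

lemma toX_surj (x : X) : ∃ p ∈ Dset, toX p = x := by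
  obtain ⟨p, rfl⟩ := qD_surj x
  exact ⟨p, p.2, toX_mem p.2⟩

lemma Dset_glue {y : ℝ} (h : ((0, y) : ℝ × ℝ) ∈ Dset) : ((1, -y) : ℝ × ℝ) ∈ Dset := by
  obtain ⟨h1, h2, h3⟩ := h
  simp only at h1 h2
  exact ⟨by norm_num, ⟨by simp only; linarith, by simp only; linarith⟩, by rw [← Nf_glue]; exact h3⟩

lemma Dset_edge {y : ℝ} (h1 : -1 ≤ y) (h2 : y ≤ 1) : ((0, y) : ℝ × ℝ) ∈ Dset := by
  refine ⟨by norm_num, ⟨h1, h2⟩, ?_⟩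
  unfold Nf
  exact le_max_of_le_left (by rw [abs_of_nonpos] <;> norm_num)

lemma toX_glue {y : ℝ} (h1 : -1 ≤ y) (h2 : y ≤ 1) : toX (0, y) = toX (1, -y) := by
  have h := Dset_edge h1 h2
  rw [toX_mem h, toX_mem (Dset_glue h)]
  apply Subtype.ext
  exact Quot.sound (Or.inr (Or.inl ⟨rfl, rfl, by simp⟩))

/-- Descend a function on the square with a hole to `X`, with parameters. -/
lemma desc {T Z : Type*} [TopologicalSpace T] [TopologicalSpace Z] [LocallyCompactSpace T]
    (φ : T × (ℝ × ℝ) → Z) (hc : ContinuousOn φ (univ ×ˢ Dset))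
    (hs : ∀ t y, -1 ≤ y → y ≤ 1 → φ (t, (0, y)) = φ (t, (1, -y))) :
    ∃ Φ : C(T × X, Z), ∀ t p, p ∈ Dset → Φ (t, toX p) = φ (t, p) := by
  have key : ∀ t (p : Dset), liftM (fun q => φ (t, q)) (hs t) (qD p : M) = φ (t, p) :=
    fun t p => rfl
  refine ⟨⟨fun q => liftM (fun r => φ (q.1, r)) (hs q.1) (q.2 : M), ?_⟩, ?_⟩
  · refine qD_quot.continuous_lift_prod_right ?_
    have h2 : ContinuousOn φ (univ ×ˢ Dset) := hc
    have h3 : Continuous (fun p : T × Dset => ((p.1, (p.2 : ℝ × ℝ)) : T × (ℝ × ℝ))) := by fun_prop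
    exact hc.comp_continuous h3 (fun p => ⟨mem_univ _, p.2.2⟩)
  · intro t p hp
    rw [toX_mem hp]
    exact key t ⟨p, hp⟩

/-- Descend a function without parameters. -/
lemma desc1 {Z : Type*} [TopologicalSpace Z] (φ : ℝ × ℝ → Z) (hc : ContinuousOn φ Dset)
    (hs : ∀ y, -1 ≤ y → y ≤ 1 → φ (0, y) = φ (1, -y)) :
    ∃ Φ : C(X, Z), ∀ p, p ∈ Dset → Φ (toX p) = φ p := by
  obtain ⟨Φ, h⟩ := desc (T := Unit) (fun q => φ q.2)
    (hc.comp continuousOn_snd (fun q hq => hq.2)) (fun _ => hs)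
  exact ⟨⟨fun x => Φ ((), x), by fun_prop⟩, fun p hp => h () p hp⟩

/-- absolute value of the second coordinate -/
noncomputable def NX : C(X, ℝ) := (desc1 Nf Nf_cont.continuousOn (fun y _ _ => Nf_glue y)).choose
lemma NX_toX {p} (hp : p ∈ Dset) : NX (toX p) = Nf p :=
  (desc1 Nf Nf_cont.continuousOn (fun y _ _ => Nf_glue y)).choose_spec p hp

lemma YX_ex : ∃ Φ : C(X, ℝ), ∀ p, p ∈ Dset → Φ (toX p) = |p.2| :=
  desc1 (fun p => |p.2|) (by fun_prop) (fun y _ _ => by simp)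
noncomputable def YX : C(X, ℝ) := YX_ex.choose
lemma YX_toX {p} (hp : p ∈ Dset) : YX (toX p) = |p.2| := YX_ex.choose_spec p hp

lemma mem_C2 (x : X) : x ∈ C2 ↔ NX x = 1/4 := by
  obtain ⟨p, hp, rfl⟩ := toX_surj x
  rw [NX_toX hp]
  constructor
  · rintro ⟨q, hq, hq2⟩
    have : NM (qm q) = Nf p := by rw [hq, toX_mem hp]; rfl
    rw [← this]
    exact (mem_Scirc q).1 hq2
  · intro h
    exact ⟨⟨p, Dset_sub hp⟩, by rw [toX_mem hp]; rfl, (mem_Scirc p).2 h⟩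

lemma mem_C1 (x : X) : x ∈ C1 ↔ YX x = 1 := by
  obtain ⟨p, hp, rfl⟩ := toX_surj x
  rw [YX_toX hp]
  constructor
  · rintro ⟨q, hq, hq2⟩
    have : |q.1.2| = |p.2| := by
      have h0 : ∀ y : ℝ, -1 ≤ y → y ≤ 1 → (fun p : ℝ × ℝ => |p.2|) (0, y) = (fun p => |p.2|) (1, -y) := by
        intro y _ _; simp
      have e1 : liftM (fun p => |p.2|) h0 (qm q) = |q.1.2| := rfl
      have e2 : liftM (fun p => |p.2|) h0 (qm ⟨p, Dset_sub hp⟩) = |p.2| := rfl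
      rw [← e1, ← e2, hq, toX_mem hp]; rfl
    rw [← this]
    rcases hq2 with h | h <;> rw [h] <;> simp
  · intro h
    refine ⟨⟨p, Dset_sub hp⟩, by rw [toX_mem hp]; rfl, ?_⟩
    exact eq_or_eq_neg_of_abs_eq h

/-! ### Part 2: explicit homotopies -/

lemma descX (φ : unitInterval × (ℝ × ℝ) → ℝ × ℝ) (hc : ContinuousOn φ (univ ×ˢ Dset))
    (hD : ∀ t, ∀ p ∈ Dset, φ (t, p) ∈ Dset)
    (h0 : ∀ t y, -1 ≤ y → y ≤ 1 → (φ (t, (0, y))).1 = 0)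
    (h1 : ∀ t y, -1 ≤ y → y ≤ 1 → (φ (t, (1, -y))).1 = 1)
    (h2 : ∀ t y, -1 ≤ y → y ≤ 1 → (φ (t, (1, -y))).2 = -(φ (t, (0, y))).2) :
    ∃ Φ : C(unitInterval × X, X), ∀ t p, p ∈ Dset → Φ (t, toX p) = toX (φ (t, p)) := by
  refine desc (fun q => toX (φ q)) (toX_cont.comp hc (fun q hq => ?_)) ?_
  · exact hD q.1 q.2 hq.2
  · intro t y hy hy'
    have e1 : φ (t, (0, y)) = (0, (φ (t, (0, y))).2) := Prod.ext (h0 t y hy hy') rfl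
    have e2 : φ (t, (1, -y)) = (1, -(φ (t, (0, y))).2) :=
      Prod.ext (h1 t y hy hy') (h2 t y hy hy')
    have := hD t _ (Dset_edge hy hy')
    change toX (φ (t, (0, y))) = toX (φ (t, (1, -y)))
    rw [e2, e1]
    exact toX_glue this.2.1.1 this.2.1.2

noncomputable def cl (x : ℝ) : ℝ := max 0 (min 1 x)
lemma cl_cont : Continuous cl := by unfold cl; fun_prop
lemma cl_nonneg (x) : 0 ≤ cl x := le_max_left _ _
lemma cl_le (x) : cl x ≤ 1 := max_le zero_le_one (min_le_left _ _)

/-- the shape of the loops -/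
noncomputable def mm (s : ℝ) : ℝ := max 0 (min 1 (min (4 * s) (4 * (1 - s))))
noncomputable def hh (y : ℝ) : ℝ := max (-(5/8)) (min (5/8) (5/2 * y))
lemma mm_cont : Continuous mm := by unfold mm; fun_prop
lemma hh_cont : Continuous hh := by unfold hh; fun_prop
lemma hh_neg (y : ℝ) : hh (-y) = - hh y := by
  unfold hh; grind
lemma mm_nonneg (x) : 0 ≤ mm x := le_max_left _ _
lemma mm_le (x) : mm x ≤ 1 := max_le zero_le_one (min_le_left _ _)
lemma mm_mid (x) (h1 : 1/4 ≤ x) (h2 : x ≤ 3/4) : mm x = 1 := by unfold mm; grind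

noncomputable def rhoF (q : ℝ × (ℝ × ℝ)) : ℝ × ℝ :=
  ((1 - q.1) * q.2.1 + q.1 * cl (2 * q.2.1 - 1/2),
    (1 - q.1 + q.1 * mm ((1 - q.1) * q.2.1 + q.1 * cl (2 * q.2.1 - 1/2))) *
      ((1 - q.1) * q.2.2 + q.1 * hh q.2.2))

lemma rhoF_cont : Continuous rhoF := by
  have := cl_cont; have := mm_cont; have := hh_cont
  unfold rhoF; fun_prop

lemma hh_bd (y : ℝ) : |hh y| ≤ 5/8 := by
  unfold hh; grind

lemma Nf_ge {p : ℝ × ℝ} {c : ℝ} : c ≤ Nf p ↔ c ≤ |p.1 - 1/2| ∨ c ≤ |p.2| := le_max_iff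

/-- first coordinate stays on the same side -/
lemma xi_aux {t a : ℝ} (ht0 : 0 ≤ t) (ht1 : t ≤ 1) (h0 : 0 ≤ a) (h1 : a ≤ 1) :
    (0 ≤ (1 - t) * a + t * cl (2 * a - 1/2) ∧ (1 - t) * a + t * cl (2 * a - 1/2) ≤ 1) ∧
    (a ≤ 1/4 → (1 - t) * a + t * cl (2 * a - 1/2) ≤ 1/4) ∧
    (3/4 ≤ a → 3/4 ≤ (1 - t) * a + t * cl (2 * a - 1/2)) := by
  have hc0 := cl_nonneg (2 * a - 1/2)
  have hc1 := cl_le (2 * a - 1/2)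
  refine ⟨⟨by nlinarith [mul_nonneg (sub_nonneg.2 ht1) h0, mul_nonneg ht0 hc0], by nlinarith⟩,
    fun h => ?_, fun h => ?_⟩
  · have : cl (2 * a - 1/2) = 0 := by unfold cl; grind
    rw [this]; nlinarith
  · have : cl (2 * a - 1/2) = 1 := by unfold cl; grind
    rw [this]; nlinarith

lemma rho_y_abs {t y : ℝ} (ht0 : 0 ≤ t) (ht1 : t ≤ 1) :
    |(1 - t) * y + t * hh y| = (1 - t) * |y| + t * |hh y| := by
  rcases le_total 0 y with h | h
  · have : 0 ≤ hh y := by unfold hh; grind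
    rw [abs_of_nonneg h, abs_of_nonneg this, abs_of_nonneg]
    have := mul_nonneg (sub_nonneg.2 ht1) h
    have := mul_nonneg ht0 ‹0 ≤ hh y›
    linarith
  · have : hh y ≤ 0 := by unfold hh; grind
    rw [abs_of_nonpos h, abs_of_nonpos this, abs_of_nonpos]
    · ring
    have := mul_nonneg (sub_nonneg.2 ht1) (neg_nonneg.2 h)
    have := mul_nonneg ht0 (neg_nonneg.2 ‹hh y ≤ 0›)
    linarith

lemma rhoF_y_abs {t : ℝ} (p : ℝ × ℝ) (ht0 : 0 ≤ t) (ht1 : t ≤ 1) :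
    |(rhoF (t, p)).2| = (1 - t + t * mm ((rhoF (t, p)).1)) * ((1 - t) * |p.2| + t * |hh p.2|) := by
  have := mm_nonneg ((rhoF (t, p)).1)
  have : 0 ≤ (1 - t + t * mm ((rhoF (t, p)).1)) := by nlinarith [mul_nonneg ht0 this]
  rw [← rho_y_abs ht0 ht1]
  have e := abs_mul (1 - t + t * mm ((rhoF (t, p)).1)) ((1 - t) * p.2 + t * hh p.2)
  rw [abs_of_nonneg this] at e
  rw [← e]
  rfl

lemma rhoF_y_le {t : ℝ} (p : ℝ × ℝ) (ht0 : 0 ≤ t) (ht1 : t ≤ 1) :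
    |(rhoF (t, p)).2| ≤ (1 - t) * |p.2| + t * |hh p.2| := by
  rw [rhoF_y_abs p ht0 ht1]
  have h1 := mm_nonneg ((rhoF (t, p)).1)
  have h2 := mm_le ((rhoF (t, p)).1)
  have h3 : 0 ≤ (1 - t) * |p.2| + t * |hh p.2| :=
    add_nonneg (mul_nonneg (sub_nonneg.2 ht1) (abs_nonneg _)) (mul_nonneg ht0 (abs_nonneg _))
  apply mul_le_of_le_one_left h3
  nlinarith

lemma rhoF_mem {t : ℝ} {p : ℝ × ℝ} (ht0 : 0 ≤ t) (ht1 : t ≤ 1) (hp : p ∈ Dset) :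
    rhoF (t, p) ∈ Dset := by
  obtain ⟨⟨a0, a1⟩, ⟨b0, b1⟩, hN⟩ := hp
  obtain ⟨hx, hl, hr⟩ := xi_aux ht0 ht1 a0 a1
  refine ⟨hx, ?_, ?_⟩
  · rw [← abs_le]
    refine (rhoF_y_le p ht0 ht1).trans ?_
    have := hh_bd p.2
    have := abs_le.2 ⟨b0, b1⟩
    nlinarith
  · rw [Nf_ge]
    by_cases hm : 1/4 < (rhoF (t, p)).1 ∧ (rhoF (t, p)).1 < 3/4
    · right
      rw [rhoF_y_abs p ht0 ht1, mm_mid _ hm.1.le hm.2.le]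
      have hy : 1/4 ≤ |p.2| := by
        rw [Nf_ge] at hN
        rcases hN with hN | hN
        · rw [le_abs] at hN
          exfalso
          rcases hN with hN | hN
          · have := hr (by linarith); unfold rhoF at hm; simp only at hm; linarith [hm.2]
          · have := hl (by linarith); unfold rhoF at hm; simp only at hm; linarith [hm.1]
        · exact hN
      have : 1/4 ≤ |hh p.2| := by
        rw [le_abs] at hy ⊢
        rcases hy with hy | hy
        · left; unfold hh; grind
        · right; unfold hh; grind
      nlinarith
    · left
      rw [le_abs]
      by_contra hc
      push Not at hc
      exact hm ⟨by linarith [hc.2], by linarith [hc.1]⟩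

lemma rho_ex : ∃ R : C(unitInterval × X, X), ∀ t p, p ∈ Dset → R (t, toX p) = toX (rhoF (t, p)) := by
  refine descX (fun q => rhoF (q.1, q.2)) ?_ ?_ ?_ ?_ ?_
  · have := rhoF_cont
    exact Continuous.continuousOn (by fun_prop)
  · intro t p hp
    exact rhoF_mem t.2.1 t.2.2 hp
  · intro t y _ _
    simp [rhoF, cl]
  · intro t y _ _
    simp [rhoF, cl]; norm_num
  · intro t y _ _
    simp only [rhoF, hh_neg]
    have e0 : cl (2 * 0 - 1/2) = 0 := by unfold cl; norm_num
    have e1 : cl (2 * 1 - 1/2) = 1 := by unfold cl; norm_num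
    have e2 : mm 0 = 0 := by unfold mm; norm_num
    have e3 : mm 1 = 0 := by unfold mm; norm_num
    rw [e0, e1]
    have e4 : (1 - (t : ℝ)) * 0 + t * 0 = 0 := by ring
    have e5 : (1 - (t : ℝ)) * 1 + t * 1 = 1 := by ring
    rw [e4, e5, e2, e3]
    ring

noncomputable def Rh : C(unitInterval × X, X) := rho_ex.choose
lemma Rh_toX (t) {p} (hp : p ∈ Dset) : Rh (t, toX p) = toX (rhoF (t, p)) := rho_ex.choose_spec t p hp

lemma Rh_zero (x : X) : Rh (0, x) = x := by
  obtain ⟨p, hp, rfl⟩ := toX_surj x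
  rw [Rh_toX 0 hp]
  congr 1
  simp [rhoF]

lemma Rh_C1 (t) (x : X) (hx : x ∈ C1) : Rh (t, x) ∉ C2 := by
  obtain ⟨p, hp, rfl⟩ := toX_surj x
  rw [mem_C1, YX_toX hp] at hx
  have hm := rhoF_mem t.2.1 t.2.2 hp
  rw [Rh_toX t hp, mem_C2, NX_toX hm]
  intro h
  have h1 : |(rhoF (t, p)).1 - 1/2| ≤ 1/4 := h ▸ le_max_left _ _
  have h2 : |(rhoF (t, p)).2| ≤ 1/4 := h ▸ le_max_right _ _
  rw [abs_le] at h1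
  rw [rhoF_y_abs p t.2.1 t.2.2, mm_mid _ (by linarith) (by linarith), hx] at h2
  have : |hh p.2| = 5/8 := by
    rcases eq_or_eq_neg_of_abs_eq hx with h | h <;> rw [h] <;> unfold hh <;> norm_num [abs_of_pos]
  rw [this] at h2
  have h0 := t.2.1; have h1 := t.2.2
  nlinarith

lemma Rh_C2 (t) (x : X) (hx : x ∈ C2) : Rh (t, x) ∉ C1 := by
  obtain ⟨p, hp, rfl⟩ := toX_surj x
  rw [mem_C2, NX_toX hp] at hx
  have hm := rhoF_mem t.2.1 t.2.2 hp
  rw [Rh_toX t hp, mem_C1, YX_toX hm]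
  intro h
  have h2 : |p.2| ≤ 1/4 := hx ▸ le_max_right _ _
  have h3 := rhoF_y_le p t.2.1 t.2.2
  rw [h] at h3
  have := hh_bd p.2
  have h0 := t.2.1; have h1 := t.2.2
  nlinarith

/-! collar push -/
noncomputable def nn (p : ℝ × ℝ) : ℝ := max (1/4) (min (1/2) (Nf p))
noncomputable def kap (p : ℝ × ℝ) : ℝ := max (1/4) (2 * nn p - 1/2) / nn p
noncomputable def Ym (y : ℝ) : ℝ := max (-1) (min 1 (y + max 0 (y - 1/2) - max 0 (-y - 1/2)))
noncomputable def SF (q : ℝ × (ℝ × ℝ)) : ℝ × ℝ :=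
  (1/2 + ((1 - q.1) + q.1 * kap q.2) * (q.2.1 - 1/2),
    (1 - q.1) * q.2.2 + q.1 * Ym (kap q.2 * q.2.2))

lemma nn_pos (p) : 0 < nn p := lt_of_lt_of_le (by norm_num) (le_max_left _ _)
lemma nn_cont : Continuous nn := by have := Nf_cont; unfold nn; fun_prop
lemma kap_cont : Continuous kap := by
  have := nn_cont
  unfold kap
  exact Continuous.div₀ (by fun_prop) this (fun p => (nn_pos p).ne')
lemma SF_cont : Continuous SF := by
  have := kap_cont
  have : Continuous Ym := by unfold Ym; fun_prop
  unfold SF; fun_prop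

lemma kap_pos (p) : 0 < kap p := div_pos (lt_of_lt_of_le (by norm_num) (le_max_left _ _)) (nn_pos p)
lemma kap_le (p) : kap p ≤ 1 := by
  rw [kap, div_le_one (nn_pos p)]
  have h1 : 1/4 ≤ nn p := le_max_left _ _
  have h2 : nn p ≤ 1/2 := max_le (by norm_num) (min_le_left _ _)
  exact max_le h1 (by linarith)
lemma kap_big {p} (h : 1/2 ≤ Nf p) : kap p = 1 := by
  have : nn p = 1/2 := by unfold nn; grind
  rw [kap, this]; norm_num
lemma kap_Nf {p} (h : Nf p ≤ 1/2) (h2 : 1/4 ≤ Nf p) : kap p * Nf p = max (1/4) (2 * Nf p - 1/2) := by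
  have : nn p = Nf p := by unfold nn; grind
  rw [kap, this, div_mul_cancel₀]; linarith
lemma Ym_id {y} (h : |y| ≤ 1/2) : Ym y = y := by unfold Ym; grind

lemma Nf_smul {l : ℝ} (hl : 0 ≤ l) (a b : ℝ) : Nf (1/2 + l * a, l * b) = l * Nf (1/2 + a, b) := by
  unfold Nf
  simp only [add_sub_cancel_left]
  rw [abs_mul, abs_mul, abs_of_nonneg hl, mul_max_of_nonneg _ _ hl]

lemma D_small {p} (hp : p ∈ Dset) (h : |p.2| ≤ 1/2) : Nf p ≤ 1/2 := by
  obtain ⟨⟨a0, a1⟩, -, -⟩ := hp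
  exact max_le (abs_le.2 ⟨by linarith, by linarith⟩) h

lemma SF_small {t : ℝ} {p : ℝ × ℝ} (h : |p.2| ≤ 1/2) :
    SF (t, p) = (1/2 + ((1 - t) + t * kap p) * (p.1 - 1/2), ((1 - t) + t * kap p) * p.2) := by
  unfold SF
  simp only
  rw [Ym_id]
  · congr 1; ring
  · rw [abs_mul, abs_of_pos (kap_pos p)]
    nlinarith [kap_le p, abs_nonneg p.2]

lemma SF_small_Nf {t : ℝ} {p : ℝ × ℝ} (ht0 : 0 ≤ t) (ht1 : t ≤ 1) (h : |p.2| ≤ 1/2) :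
    Nf (SF (t, p)) = ((1 - t) + t * kap p) * Nf p := by
  have := kap_pos p
  have hl : 0 ≤ (1 - t) + t * kap p := by nlinarith [mul_nonneg ht0 this.le]
  rw [SF_small h, Nf_smul hl]
  congr 2
  ext <;> simp

lemma SF_big {t : ℝ} {p : ℝ × ℝ} (h : 1/2 ≤ |p.2|) :
    SF (t, p) = (p.1, (1 - t) * p.2 + t * Ym p.2) := by
  unfold SF
  simp only
  rw [kap_big (le_max_of_le_right h)]
  ext <;> simp

lemma SF_mem {t : ℝ} {p : ℝ × ℝ} (ht0 : 0 ≤ t) (ht1 : t ≤ 1) (hp : p ∈ Dset) :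
    SF (t, p) ∈ Dset := by
  have hp' := hp
  obtain ⟨⟨a0, a1⟩, ⟨b0, b1⟩, hN⟩ := hp
  rcases le_total |p.2| (1/2) with h | h
  · have k0 := kap_pos p
    have k1 := kap_le p
    have hl0 : 0 ≤ (1 - t) + t * kap p := by nlinarith [mul_nonneg ht0 k0.le]
    have hl1 : (1 - t) + t * kap p ≤ 1 := by nlinarith
    have hNs := SF_small_Nf ht0 ht1 h
    have hNh := D_small hp' h
    have hNl := kap_Nf hNh hN
    have hle : Nf (SF (t, p)) ≤ 1/2 := by rw [hNs]; nlinarith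
    have h1 := (le_max_left _ _).trans hle
    have h2 := (le_max_right _ _).trans hle
    rw [abs_le] at h1 h2
    refine ⟨⟨by linarith, by linarith⟩, ⟨by linarith, by linarith⟩, ?_⟩
    rw [hNs]
    have : 1/4 ≤ kap p * Nf p := by rw [hNl]; exact le_max_left _ _
    nlinarith
  · rw [SF_big h]
    have hy : |p.2| ≤ 1 := abs_le.2 ⟨b0, b1⟩
    have e1 : -1 ≤ Ym p.2 := le_max_left _ _
    have e2 : Ym p.2 ≤ 1 := max_le (by norm_num) (min_le_left _ _)
    refine ⟨⟨a0, a1⟩, ⟨by simp only; nlinarith, by simp only; nlinarith⟩, ?_⟩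
    rw [Nf_ge]; right
    simp only
    rw [le_abs] at h ⊢
    rcases h with h | h
    · left
      have : 1/2 ≤ Ym p.2 := by unfold Ym; grind
      nlinarith
    · right
      have : Ym p.2 ≤ -(1/2) := by unfold Ym; grind
      nlinarith

lemma S_ex : ∃ R : C(unitInterval × X, X), ∀ t p, p ∈ Dset → R (t, toX p) = toX (SF (t, p)) := by
  have hk0 : ∀ y : ℝ, kap (0, y) = 1 := fun y =>
    kap_big (le_max_of_le_left (by simp only; rw [abs_of_nonpos] <;> norm_num))
  have hk1 : ∀ y : ℝ, kap (1, y) = 1 := fun y =>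
    kap_big (le_max_of_le_left (by simp only; rw [abs_of_nonneg] <;> norm_num))
  refine descX (fun q => SF (q.1, q.2)) ?_ ?_ ?_ ?_ ?_
  · have := SF_cont
    exact Continuous.continuousOn (by fun_prop)
  · intro t p hp
    exact SF_mem t.2.1 t.2.2 hp
  · intro t y _ _
    simp [SF, hk0]
  · intro t y _ _
    simp [SF, hk1]
  · intro t y _ _
    simp only [SF, hk0, hk1, one_mul]
    have : Ym (-y) = - Ym y := by unfold Ym; grind
    rw [this]; ring

noncomputable def Sh : C(unitInterval × X, X) := S_ex.choose
lemma Sh_toX (t) {p} (hp : p ∈ Dset) : Sh (t, toX p) = toX (SF (t, p)) := S_ex.choose_spec t p hp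

lemma Sh_zero (x : X) : Sh (0, x) = x := by
  obtain ⟨p, hp, rfl⟩ := toX_surj x
  rw [Sh_toX 0 hp]
  congr 1
  simp [SF]

lemma Sh_Bd (t) (x : X) (hx : x ∈ Bd) : Sh (t, x) = x := by
  obtain ⟨p, hp, rfl⟩ := toX_surj x
  rw [Sh_toX t hp]
  congr 1
  rcases hx with hx | hx
  · rw [mem_C1, YX_toX hp] at hx
    rw [SF_big (by linarith)]
    have : Ym p.2 = p.2 := by unfold Ym; grind
    rw [this]; ext <;> simp; ring
  · rw [mem_C2, NX_toX hp] at hx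
    have h2 : |p.2| ≤ 1/4 := hx ▸ le_max_right _ _
    rw [SF_small (by linarith)]
    have h3 := kap_Nf (p := p) (by linarith) (by linarith)
    have : kap p = 1 := by rw [hx] at h3; norm_num at h3; linarith
    rw [this]; ext <;> simp

lemma Sh_C2 (x : X) (hx : NX x ≤ 3/8) : Sh (1, x) ∈ C2 := by
  obtain ⟨p, hp, rfl⟩ := toX_surj x
  have hm := SF_mem (t := 1) zero_le_one le_rfl hp
  rw [NX_toX hp] at hx
  rw [Sh_toX 1 hp, mem_C2]
  simp only [Set.Icc.coe_one]
  have h2 : |p.2| ≤ 3/8 := (le_max_right _ _).trans hx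
  rw [NX_toX hm, SF_small_Nf zero_le_one le_rfl (by linarith)]
  have h3 := kap_Nf (p := p) (by linarith) hp.2.2
  rw [max_eq_left (by linarith)] at h3
  linarith

lemma Sh_C1 (x : X) (hx : 3/4 ≤ YX x) : Sh (1, x) ∈ C1 := by
  obtain ⟨p, hp, rfl⟩ := toX_surj x
  have hm := SF_mem (t := 1) zero_le_one le_rfl hp
  rw [YX_toX hp] at hx
  rw [Sh_toX 1 hp, mem_C1]
  simp only [Set.Icc.coe_one]
  rw [YX_toX hm, SF_big (by linarith)]
  simp only [sub_self, zero_mul, one_mul, zero_add]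
  unfold Ym; grind

lemma YX_le (x : X) : YX x ≤ 1 := by
  obtain ⟨p, hp, rfl⟩ := toX_surj x
  rw [YX_toX hp]; exact abs_le.2 hp.2.1
lemma NX_ge (x : X) : 1/4 ≤ NX x := by
  obtain ⟨p, hp, rfl⟩ := toX_surj x
  rw [NX_toX hp]; exact hp.2.2
lemma YX_le_NX (x : X) : YX x ≤ NX x := by
  obtain ⟨p, hp, rfl⟩ := toX_surj x
  rw [NX_toX hp, YX_toX hp]; exact le_max_right _ _

lemma C1_C2 {x : X} (h : x ∈ C1) : x ∉ C2 := by
  rw [mem_C1] at h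
  rw [mem_C2]
  have := YX_le_NX x
  intro h2; linarith

noncomputable def A1 (x : X) : ℝ := min 1 (4 * (1 - YX x))
noncomputable def A2 (x : X) : ℝ := min 1 (8 * (NX x - 1/4))
lemma A1_cont : Continuous A1 := by unfold A1; fun_prop
lemma A2_cont : Continuous A2 := by unfold A2; fun_prop

/-! ### Part 3: the tree and its map to the figure eight -/

abbrev Gp := FreeGroup Bool
abbrev Wd := List (Bool × Bool)

open Classical in
noncomputable def pt (w : Wd) (s : ℝ) (L : Wd) : ℝ :=
  if L = w then s else if L ≠ [] ∧ L <:+ w then 1 else 0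

open Classical in
noncomputable def vert (g : Gp) (L : Wd) : ℝ := if L ≠ [] ∧ L <:+ g.toWord then 1 else 0

lemma vert_nonneg (g L) : 0 ≤ vert g L := by unfold vert; split_ifs <;> norm_num
lemma vert_le (g L) : vert g L ≤ 1 := by unfold vert; split_ifs <;> norm_num
lemma vert_diff (g g' L) : |vert g L - vert g' L| ≤ 1 := by
  rw [abs_le]
  constructor <;> linarith [vert_nonneg g L, vert_le g L, vert_nonneg g' L, vert_le g' L]

noncomputable def let1 (l : Bool × Bool) : Gp := FreeGroup.mk [l]

noncomputable def ed (g : Gp) (l : Bool × Bool) (s : ℝ) (L : Wd) : ℝ :=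
  (1 - s) * vert g L + s * vert (let1 l * g) L

lemma word_mul (l : Bool × Bool) (g : Gp) :
    (let1 l * g).toWord = l :: g.toWord ∨ g.toWord = (l.1, !l.2) :: (let1 l * g).toWord := by
  have h : let1 l * g = FreeGroup.mk (l :: g.toWord) := by
    conv_lhs => rw [← FreeGroup.mk_toWord (x := g)]
    rw [let1, FreeGroup.mul_mk]; rfl
  rw [h, FreeGroup.toWord_mk, FreeGroup.reduce.cons, FreeGroup.reduce_toWord]
  rcases hw : g.toWord with _ | ⟨a, t⟩
  · left; rfl
  · simp only
    split_ifs with hc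
    · right
      obtain ⟨a1, a2⟩ := a
      obtain ⟨l1, l2⟩ := l
      simp only at hc
      obtain ⟨rfl, rfl⟩ := hc
      simp
    · left; rfl

lemma suffix_cons_ne {a : Bool × Bool} {w L : Wd} (h : L ≠ a :: w) : L <:+ a :: w ↔ L <:+ w := by
  rw [List.suffix_cons_iff]; simp [h]

lemma not_suffix_cons {a : Bool × Bool} {w : Wd} : ¬ (a :: w) <:+ w := by
  intro h
  have := h.length_le
  simp at this

lemma ed_cases (g : Gp) (l : Bool × Bool) (s : ℝ) :
    ((∃ w, ed g l s = pt (l :: w) s) ∨ (∃ w, ed g l s = pt ((l.1, !l.2) :: w) (1 - s))) := by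
  rcases word_mul l g with h | h
  · left
    refine ⟨g.toWord, ?_⟩
    ext L
    unfold ed vert pt
    rw [h]
    by_cases hL : L = l :: g.toWord
    · subst hL
      rw [if_neg (fun h => not_suffix_cons h.2), if_pos ⟨by simp, List.suffix_rfl⟩, if_pos rfl]
      ring
    · simp only [suffix_cons_ne hL, if_neg hL]
      split_ifs <;> ring
  · right
    refine ⟨(let1 l * g).toWord, ?_⟩
    ext L
    unfold ed vert pt
    rw [h]
    by_cases hL : L = (l.1, !l.2) :: (let1 l * g).toWord
    · subst hL
      rw [if_neg (c := _ ∧ _ <:+ (let1 l * g).toWord) (fun h => not_suffix_cons h.2),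
        if_pos ⟨by simp, List.suffix_rfl⟩, if_pos rfl]
      ring
    · simp only [suffix_cons_ne hL, if_neg hL]
      split_ifs <;> ring

/-- the tree as functions on words -/
structure Tr (c : Wd → ℝ) : Prop where
  nil : c [] = 0
  nonneg : ∀ L, 0 ≤ c L
  le : ∀ L, c L ≤ 1
  len : ∀ v w, v ≠ w → 0 < c v → 0 < c w → v.length ≠ w.length ∧ (v.length < w.length → c v = 1)

lemma Tr.uniq {c} (h : Tr c) {v w : Wd} (hv : 0 < c v) (hv1 : c v < 1) (hw : 0 < c w) (hw1 : c w < 1) :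
    v = w := by
  by_contra hne
  have h1 := h.len v w hne hv hw
  have h2 := h.len w v (Ne.symm hne) hw hv
  rcases lt_or_gt_of_ne h1.1 with h3 | h3
  · linarith [h1.2 h3]
  · linarith [h2.2 h3]

lemma suff_eq {v w z : Wd} (hv : v <:+ z) (hw : w <:+ z) (h : v.length = w.length) : v = w := by
  rw [List.suffix_iff_eq_drop] at hv hw
  rw [hv, hw, h]

lemma Tr_pt (a : Bool × Bool) (w : Wd) {s : ℝ} (h0 : 0 ≤ s) (h1 : s ≤ 1) : Tr (pt (a :: w) s) where
  nil := by simp [pt]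
  nonneg L := by unfold pt; split_ifs <;> linarith
  le L := by unfold pt; split_ifs <;> linarith
  len v z hne hv hz := by
    have key : ∀ u, 0 < pt (a :: w) s u → u <:+ a :: w := by
      intro u hu
      unfold pt at hu
      split_ifs at hu with h2 h3
      · rw [h2]
      · exact h3.2
      · exact absurd hu (lt_irrefl _)
    refine ⟨fun h => hne (suff_eq (key v hv) (key z hz) h), fun h => ?_⟩
    have hvne : v ≠ a :: w := by
      rintro rfl
      exact absurd (key z hz).length_le (by omega)
    unfold pt at hv ⊢
    rw [if_neg hvne] at hv ⊢
    split_ifs at hv ⊢ with h3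
    · rfl
    · exact absurd hv (lt_irrefl _)

lemma Tr_ed (g l) {s : ℝ} (h0 : 0 ≤ s) (h1 : s ≤ 1) : Tr (ed g l s) := by
  rcases ed_cases g l s with ⟨w, h⟩ | ⟨w, h⟩ <;> rw [h]
  · exact Tr_pt _ _ h0 h1
  · exact Tr_pt _ _ (by linarith) (by linarith)

lemma ed_zero (g l) : ed g l 0 = vert g := by
  ext L; simp [ed]

lemma Tr_vert (g) : Tr (vert g) := by
  rw [← ed_zero g (true, true)]; exact Tr_ed _ _ le_rfl zero_le_one

/-! the arcs -/
lemma arc_mem (b : Bool) (s : ℝ) : ((cl s, (if b then 1 else -1) * (5/8 * mm (cl s))) : ℝ × ℝ) ∈ Dset := by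
  have h1 := mm_nonneg (cl s)
  have h2 := mm_le (cl s)
  refine ⟨⟨cl_nonneg _, cl_le _⟩, ?_, ?_⟩
  · cases b <;> constructor <;> simp <;> linarith
  · rw [Nf_ge]
    simp only
    by_cases h : 1/4 < cl s ∧ cl s < 3/4
    · right
      rw [mm_mid _ h.1.le h.2.le]
      cases b <;> norm_num [abs_of_pos]
    · left
      rw [le_abs]
      by_contra hc
      push Not at hc
      exact h ⟨by linarith [hc.2], by linarith [hc.1]⟩

noncomputable def arcP (b : Bool) (s : ℝ) : X := toX (cl s, (if b then 1 else -1) * (5/8 * mm (cl s)))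
noncomputable def arc (l : Bool × Bool) (s : ℝ) : X := if l.2 then arcP l.1 s else arcP l.1 (1 - s)
noncomputable def p0 : X := toX (0, 0)

lemma arcP_cont (b) : Continuous (arcP b) := by
  unfold arcP
  have := cl_cont; have := mm_cont
  exact toX_cont.comp_continuous (by fun_prop) (arc_mem b)
lemma arc_cont (l) : Continuous (arc l) := by
  unfold arc
  have := arcP_cont l.1
  split_ifs <;> fun_prop

lemma arcP_zero (b) : arcP b 0 = p0 := by
  have h : cl 0 = 0 := by simp [cl]
  have h2 : mm 0 = 0 := by simp [mm]
  simp [arcP, h, h2, p0]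
lemma arcP_one (b) : arcP b 1 = p0 := by
  have h : cl 1 = 1 := by simp [cl]
  have h2 : mm 1 = 0 := by simp [mm]
  have := toX_glue (y := 0) (by norm_num) (by norm_num)
  rw [neg_zero] at this
  simp [arcP, h, h2, p0, this]
lemma arc_zero (l) : arc l 0 = p0 := by
  unfold arc; split_ifs <;> simp [arcP_zero, arcP_one]
lemma arc_one (l) : arc l 1 = p0 := by
  unfold arc; split_ifs <;> simp [arcP_zero, arcP_one]

lemma arcP_C1 (b s) : arcP b s ∉ C1 := by
  have h1 := mm_nonneg (cl s)
  have h2 := mm_le (cl s)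
  rw [mem_C1, arcP, YX_toX (arc_mem b s)]
  cases b <;> simp [abs_mul, abs_of_nonneg h1] <;> intro h <;> linarith
lemma arcP_C2 (b s) : arcP b s ∉ C2 := by
  rw [mem_C2, arcP, NX_toX (arc_mem b s)]
  intro h
  have h1 : |cl s - 1/2| ≤ 1/4 := h ▸ le_max_left _ _
  have h2 : |(if b then 1 else -1) * (5/8 * mm (cl s))| ≤ 1/4 := h ▸ le_max_right _ _
  rw [abs_le] at h1
  rw [mm_mid _ (by linarith) (by linarith)] at h2
  cases b <;> norm_num [abs_of_pos] at h2

open Classical in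
noncomputable def psi (c : Wd → ℝ) : X :=
  if h : ∃ L : Wd, 0 < c L ∧ c L < 1 then arc (h.choose.headD (true, true)) (c h.choose) else p0

lemma psi_frac {c} (hc : Tr c) {L} (h0 : 0 < c L) (h1 : c L < 1) :
    psi c = arc (L.headD (true, true)) (c L) := by
  have h : ∃ L : Wd, 0 < c L ∧ c L < 1 := ⟨L, h0, h1⟩
  unfold psi
  rw [dif_pos h, hc.uniq h.choose_spec.1 h.choose_spec.2 h0 h1]

lemma psi_not {c} (h : ¬ ∃ L : Wd, 0 < c L ∧ c L < 1) : psi c = p0 := dif_neg h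

lemma psi_eq (c) : ∃ b s, psi c = arcP b s := by
  by_cases h : ∃ L : Wd, 0 < c L ∧ c L < 1
  · unfold psi
    rw [dif_pos h]
    unfold arc
    split_ifs
    · exact ⟨_, _, rfl⟩
    · exact ⟨_, _, rfl⟩
  · rw [psi_not h, ← arcP_zero true]; exact ⟨_, _, rfl⟩

lemma psi_C1 (c) : psi c ∉ C1 := by
  obtain ⟨b, s, h⟩ := psi_eq c; rw [h]; exact arcP_C1 _ _
lemma psi_C2 (c) : psi c ∉ C2 := by
  obtain ⟨b, s, h⟩ := psi_eq c; rw [h]; exact arcP_C2 _ _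

lemma psi_vert (g) : psi (vert g) = p0 := by
  apply psi_not
  rintro ⟨L, h0, h1⟩
  unfold vert at h0 h1
  split_ifs at h0 h1 <;> linarith

lemma psi_ed (g b) {s : ℝ} (h0 : 0 < s) (h1 : s < 1) : psi (ed g (b, true) s) = arcP b s := by
  have hT := Tr_ed g (b, true) h0.le h1.le
  rcases ed_cases g (b, true) s with ⟨w, h⟩ | ⟨w, h⟩ <;> rw [h] at hT ⊢
  · have e : pt ((b, true) :: w) s ((b, true) :: w) = s := by simp [pt]
    rw [psi_frac hT (L := (b, true) :: w) (by rw [e]; exact h0) (by rw [e]; exact h1), e]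
    simp [arc]
  · simp only [Bool.not_true] at hT ⊢
    have e : pt ((b, false) :: w) (1 - s) ((b, false) :: w) = 1 - s := by simp [pt]
    rw [psi_frac hT (L := (b, false) :: w) (by rw [e]; linarith) (by rw [e]; linarith), e]
    simp [arc]

def UC {Z : Type*} [TopologicalSpace Z] (φ : Z → Wd → ℝ) : Prop :=
  ∀ z, ∀ ε > 0, ∀ᶠ z' in nhds z, ∀ L, |φ z' L - φ z L| < ε

lemma psi_cont {Z : Type*} [TopologicalSpace Z] {φ : Z → Wd → ℝ} (hT : ∀ z, Tr (φ z)) (hU : UC φ) :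
    Continuous (fun z => psi (φ z)) := by
  rw [continuous_iff_continuousAt]
  intro z
  by_cases h : ∃ L : Wd, 0 < φ z L ∧ φ z L < 1
  · obtain ⟨L, h0, h1⟩ := h
    have hc : ContinuousAt (fun z => φ z L) z := by
      rw [Metric.continuousAt_iff']
      intro ε hε
      filter_upwards [hU z ε hε] with z' hz'
      exact hz' L
    have e : (fun z => psi (φ z)) =ᶠ[nhds z] (fun z => arc (L.headD (true, true)) (φ z L)) := by
      filter_upwards [hc.eventually (lt_mem_nhds h0), hc.eventually (gt_mem_nhds h1)] with z' a b
      exact psi_frac (hT z') a b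
    rw [continuousAt_congr e]
    exact (arc_cont _).continuousAt.comp hc
  · rw [ContinuousAt, psi_not h]
    intro N hN
    have key : ∀ l, ∃ ε > 0, ∀ s : ℝ, |s| < ε ∨ |s - 1| < ε → arc l s ∈ N := by
      intro l
      have t0 := (arc_cont l).continuousAt (x := 0)
      have t1 := (arc_cont l).continuousAt (x := 1)
      rw [ContinuousAt, arc_zero] at t0
      rw [ContinuousAt, arc_one] at t1
      obtain ⟨e0, h0, h0'⟩ := Metric.eventually_nhds_iff.1 (t0.eventually_mem hN)
      obtain ⟨e1, h1, h1'⟩ := Metric.eventually_nhds_iff.1 (t1.eventually_mem hN)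
      refine ⟨min e0 e1, lt_min h0 h1, fun s hs => ?_⟩
      rcases hs with hs | hs
      · apply h0'; rw [Real.dist_eq, sub_zero]; exact hs.trans_le (min_le_left _ _)
      · apply h1'; rw [Real.dist_eq]; exact hs.trans_le (min_le_right _ _)
    choose ε hε hεN using key
    obtain ⟨δ, hδ, hδl⟩ : ∃ δ > 0, ∀ l, δ ≤ ε l := by
      obtain ⟨l0, hl0⟩ := Finite.exists_min ε
      exact ⟨ε l0, hε l0, hl0⟩
    change ∀ᶠ z' in nhds z, psi (φ z') ∈ N
    filter_upwards [hU z δ hδ] with z' hz'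
    by_cases h2 : ∃ L : Wd, 0 < φ z' L ∧ φ z' L < 1
    · obtain ⟨L, h0, h1⟩ := h2
      rw [psi_frac (hT z') h0 h1]
      apply hεN
      have h3 := (hz' L).trans_le (hδl (L.headD (true, true)))
      have h4 : φ z L = 0 ∨ φ z L = 1 := by
        by_contra hc
        push Not at hc
        exact h ⟨L, lt_of_le_of_ne ((hT z).nonneg L) (Ne.symm hc.1), lt_of_le_of_ne ((hT z).le L) hc.2⟩
      rcases h4 with h4 | h4 <;> rw [h4] at h3
      · left; rwa [sub_zero] at h3
      · right; exact h3
    · rw [psi_not h2]; exact mem_of_mem_nhds hN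

noncomputable def contr (s : ℝ) (c : Wd → ℝ) (L : Wd) : ℝ := min (c L) (cl (s - (L.length - 1)))

lemma Tr_contr (s) {c} (h : Tr c) : Tr (contr s c) where
  nil := by simp only [contr, h.nil]; exact min_eq_left (cl_nonneg _)
  nonneg L := le_min (h.nonneg L) (cl_nonneg _)
  le L := (min_le_left _ _).trans (h.le L)
  len v w hne hv hw := by
    unfold contr at hv hw ⊢
    rw [lt_min_iff] at hv hw
    have h1 := h.len v w hne hv.1 hw.1
    refine ⟨h1.1, fun hl => ?_⟩
    rw [h1.2 hl]
    apply min_eq_left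
    have h2 := hw.2
    have h3 : (v.length : ℝ) + 1 ≤ w.length := by exact_mod_cast hl
    unfold cl at h2 ⊢
    have h4 : 0 < s - (w.length - 1) := by
      by_contra hc
      push Not at hc
      rw [max_eq_left (min_le_of_right_le hc)] at h2
      exact lt_irrefl _ h2
    exact le_max_of_le_right (le_min le_rfl (by linarith))

lemma cl_lip (x y : ℝ) : |cl x - cl y| ≤ |x - y| := by
  unfold cl
  refine (abs_max_sub_max_le_max _ _ _ _).trans ?_
  refine max_le (by simp) ?_
  refine (abs_min_sub_min_le_max _ _ _ _).trans ?_
  exact max_le (by simp) le_rfl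

lemma UC_contr {Z : Type*} [TopologicalSpace Z] {φ : Z → Wd → ℝ} {s : Z → ℝ} (hU : UC φ)
    (hs : Continuous s) : UC (fun z => contr (s z) (φ z)) := by
  intro z ε hε
  filter_upwards [hU z ε hε, Metric.continuousAt_iff'.1 hs.continuousAt ε hε] with z' h1 h2 L
  unfold contr
  refine (abs_min_sub_min_le_max _ _ _ _).trans_lt (max_lt (h1 L) ?_)
  refine (cl_lip _ _).trans_lt ?_
  rw [sub_sub_sub_cancel_right]; exact h2

lemma contr_big {n : ℕ} {c} (h : Tr c) (hn : ∀ L : Wd, n < L.length → c L = 0) : contr n c = c := by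
  ext L
  unfold contr
  apply min_eq_left
  by_cases hL : n < L.length
  · rw [hn L hL]; exact cl_nonneg _
  · refine (h.le L).trans (le_max_of_le_right (le_min le_rfl ?_))
    have : (L.length : ℝ) ≤ n := by exact_mod_cast not_lt.1 hL
    linarith

lemma psi_contr_zero {c} (h : Tr c) : psi (contr 0 c) = p0 := by
  apply psi_not
  rintro ⟨L, h0, -⟩
  unfold contr at h0
  rw [lt_min_iff] at h0
  rcases L with _ | ⟨a, L⟩
  · rw [h.nil] at h0; exact lt_irrefl _ h0.1
  · have h1 := h0.2
    unfold cl at h1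
    rw [max_eq_left (min_le_of_right_le (by simp))] at h1
    exact lt_irrefl _ h1

lemma vert_len (g : Gp) (L : Wd) (h : g.norm < L.length) : vert g L = 0 := by
  unfold vert
  rw [if_neg]
  rintro ⟨-, h2⟩
  have := h2.length_le
  unfold FreeGroup.norm at h
  omega

lemma norm_let1 (l) : (let1 l).norm ≤ 1 := by
  unfold let1
  exact FreeGroup.norm_mk_le

/-! ### Part 4: lifting to a covering given by a cocycle -/

section cocycle
variable {B G : Type} [TopologicalSpace B] [Group G] [TopologicalSpace G] [DiscreteTopology G]

def eco (c : B → G) (i : Bool) (x : B) : G := if i then 1 else c x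

open Classical in
noncomputable def core (U V : Set B) (hU : IsOpen U) (hV : IsOpen V) (hUV : ∀ x, x ∈ U ∨ x ∈ V) (c : B → G)
    (hc : ∀ x ∈ U, x ∈ V → ∀ᶠ y in nhds x, c y = c x) : FiberBundleCore Bool B G where
  baseSet i := if i then U else V
  isOpen_baseSet i := by cases i <;> simpa
  indexAt x := if x ∈ U then true else false
  mem_baseSet_at x := by
    by_cases h : x ∈ U
    · simp [h]
    · simpa [h] using (hUV x).resolve_left h
  coordChange i j x v := (eco c j x)⁻¹ * eco c i x * v
  coordChange_self i x _ v := by simp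
  continuousOn_coordChange i j := by
    rintro ⟨x, v⟩ ⟨⟨h1, h2⟩, -⟩
    apply ContinuousAt.continuousWithinAt
    have e : (fun p : B × G => (eco c j p.1)⁻¹ * eco c i p.1 * p.2) =ᶠ[nhds (x, v)]
        (fun _ => (eco c j x)⁻¹ * eco c i x * v) := by
      have a1 : ∀ᶠ p : B × G in nhds (x, v), p.2 = v :=
        (continuous_snd.tendsto (x, v)).eventually (p := fun u => u = v) (by simp [nhds_discrete])
      have a2 : ∀ᶠ y in nhds x, (eco c j y)⁻¹ * eco c i y = (eco c j x)⁻¹ * eco c i x := by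
        cases i <;> cases j
        · simp
        · filter_upwards [hc x h2 h1] with y hy
          simp [eco, hy]
        · filter_upwards [hc x h1 h2] with y hy
          simp [eco, hy]
        · simp
      filter_upwards [a1, (continuous_fst.tendsto (x, v)).eventually a2] with p h3 h4
      rw [h3, h4]
    exact continuousAt_const.congr e.symm
  coordChange_comp i j k x _ v := by group

lemma lift_cocycle (U V : Set B) (hU : IsOpen U) (hV : IsOpen V) (hUV : ∀ x, x ∈ U ∨ x ∈ V) (c : B → G)
    (hc : ∀ x ∈ U, x ∈ V → ∀ᶠ y in nhds x, c y = c x) (φ : C(ℝ × ℝ, B)) :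
    ∃ gU gV : ℝ × ℝ → G, (∀ p, φ p ∈ U → ∀ᶠ q in nhds p, gU q = gU p) ∧
      (∀ p, φ p ∈ V → ∀ᶠ q in nhds p, gV q = gV p) ∧
      (∀ p, φ p ∈ U → φ p ∈ V → gU p = c (φ p) * gV p) := by
  let Z := core U V hU hV hUV c hc
  have hcov : IsCoveringMap (Bundle.TotalSpace.proj : Bundle.TotalSpace G Z.Fiber → B) :=
    FiberBundle.isCoveringMap
  obtain ⟨F, ⟨-, hF⟩, -⟩ := hcov.existsUnique_continuousMap_lifts φ (0 : ℝ × ℝ)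
    (⟨φ 0, (1 : G)⟩ : Bundle.TotalSpace G Z.Fiber) rfl
  have hF' : ∀ p, (F p).proj = φ p := fun p => congrFun hF p
  have loc : ∀ i p, φ p ∈ Z.baseSet i →
      ∀ᶠ q in nhds p, ((Z.localTriv i) (F q)).2 = ((Z.localTriv i) (F p)).2 := by
    intro i p hp
    have h1 : F p ∈ (Z.localTriv i).source := by
      rw [Z.mem_localTriv_source]; rw [hF' p]; exact hp
    have h2 : ContinuousAt (fun q => ((Z.localTriv i) (F q)).2) p := by
      refine continuous_snd.continuousAt.comp ?_
      exact ContinuousAt.comp ((Z.localTriv i).continuousAt h1) F.continuous.continuousAt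
    have := h2.eventually_mem (isOpen_discrete {((Z.localTriv i) (F p)).2} |>.mem_nhds rfl)
    exact this
  refine ⟨fun p => ((Z.localTriv true) (F p)).2, fun p => ((Z.localTriv false) (F p)).2,
    fun p hp => loc true p ?_, fun p hp => loc false p ?_, fun p h1 h2 => ?_⟩
  · change φ p ∈ (if true = true then U else V)
    rwa [if_pos rfl]
  · change φ p ∈ (if false = true then U else V)
    rwa [if_neg (by simp)]
  · simp only [FiberBundleCore.localTriv_apply]
    rw [hF' p]
    simp only [Z, core, eco]
    simp [h1]
    exact (one_mul (M := G) _).trans (mul_inv_cancel_left (G := G) _ _).symm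

end cocycle

/-! coordinates -/
lemma mX_ex : ∃ Φ : C(X, ℝ), ∀ p, p ∈ Dset → Φ (toX p) = max 0 (1/2 - 2 * |p.1 - 1/2|) :=
  desc1 (fun p => max 0 (1/2 - 2 * |p.1 - 1/2|)) (by fun_prop) (fun y _ _ => by norm_num)
noncomputable def mX : C(X, ℝ) := mX_ex.choose
lemma mX_toX {p} (hp : p ∈ Dset) : mX (toX p) = max 0 (1/2 - 2 * |p.1 - 1/2|) := mX_ex.choose_spec p hp

lemma eX_ex : ∃ Φ : C(X, ℝ), ∀ p, p ∈ Dset → Φ (toX p) = max (-p.1) (min (p.1 - 1/2) (1 - p.1)) :=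
  desc1 (fun p => max (-p.1) (min (p.1 - 1/2) (1 - p.1))) (by fun_prop) (fun y _ _ => by norm_num)
noncomputable def eX : C(X, ℝ) := eX_ex.choose
lemma eX_toX {p} (hp : p ∈ Dset) : eX (toX p) = max (-p.1) (min (p.1 - 1/2) (1 - p.1)) :=
  eX_ex.choose_spec p hp

lemma bX_ex : ∃ Φ : C(X, ℝ), ∀ p, p ∈ Dset → Φ (toX p) = p.2 * (1/2 - |p.1 - 1/2|) :=
  desc1 (fun p => p.2 * (1/2 - |p.1 - 1/2|)) (by fun_prop) (fun y _ _ => by norm_num)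
noncomputable def bX : C(X, ℝ) := bX_ex.choose
lemma bX_toX {p} (hp : p ∈ Dset) : bX (toX p) = p.2 * (1/2 - |p.1 - 1/2|) :=
  bX_ex.choose_spec p hp

def Us : Set X := {x | mX x < 1/2}
def Vs : Set X := {x | 0 < mX x}

lemma Us_open : IsOpen Us := isOpen_lt mX.continuous continuous_const
lemma Vs_open : IsOpen Vs := isOpen_lt continuous_const mX.continuous

lemma V_coord {p} (hp : p ∈ Dset) (h : toX p ∈ Vs) :
    1/4 < p.1 ∧ p.1 < 3/4 ∧ mX (toX p) = 1/2 - 2 * |p.1 - 1/2| ∧ eX (toX p) = p.1 - 1/2 ∧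
      ((0 < bX (toX p) ∧ 1/4 ≤ p.2) ∨ (bX (toX p) < 0 ∧ p.2 ≤ -(1/4))) := by
  have h' : 0 < mX (toX p) := h
  rw [mX_toX hp, lt_max_iff] at h'
  have h1 : |p.1 - 1/2| < 1/4 := by
    rcases h' with h' | h'
    · exact absurd h' (lt_irrefl _)
    · linarith
  have h1a := abs_lt.1 h1
  refine ⟨by linarith, by linarith, ?_, ?_, ?_⟩
  · rw [mX_toX hp]; exact max_eq_right (by linarith)
  · rw [eX_toX hp, min_eq_left (by linarith), max_eq_right (by linarith)]
  · have hN := hp.2.2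
    rw [Nf_ge] at hN
    have h2 := hN.resolve_left (by linarith)
    rw [bX_toX hp]
    rw [le_abs] at h2
    rcases h2 with h2 | h2
    · left; exact ⟨mul_pos (by linarith) (by linarith), h2⟩
    · right; exact ⟨mul_neg_of_neg_of_pos (by linarith) (by linarith), by linarith⟩

lemma UV_cover (x : X) : x ∈ Us ∨ x ∈ Vs := by
  by_cases h : x ∈ Vs
  · exact Or.inr h
  · left
    have : ¬ 0 < mX x := h
    change mX x < 1/2
    linarith

lemma V_bX {x} (h : x ∈ Vs) : bX x ≠ 0 := by
  obtain ⟨p, hp, rfl⟩ := toX_surj x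
  rcases (V_coord hp h).2.2.2.2 with h | h
  · exact h.1.ne'
  · exact h.1.ne

lemma V_mX {x} (h : x ∈ Vs) : mX x = 1/2 - 2 * |eX x| := by
  obtain ⟨p, hp, rfl⟩ := toX_surj x
  obtain ⟨-, -, h1, h2, -⟩ := V_coord hp h
  rw [h1, h2]

lemma UV_eX {x} (hu : x ∈ Us) (h : x ∈ Vs) : eX x ≠ 0 := by
  intro h0
  have h1 := V_mX h
  have h2 : mX x < 1/2 := hu
  rw [h0, abs_zero] at h1
  linarith

noncomputable def topb (x : X) : Bool := decide (0 < bX x)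
open Classical in
noncomputable def cco (x : X) : Gp := if 0 < eX x then let1 (topb x, true) else 1

lemma pos_locconst {f : C(X, ℝ)} {x : X} (h : f x ≠ 0) : ∀ᶠ y in nhds x, (0 < f y ↔ 0 < f x) := by
  rcases lt_or_gt_of_ne h with h | h
  · filter_upwards [f.continuous.continuousAt.eventually (gt_mem_nhds h)] with y hy
    constructor <;> intro h' <;> linarith
  · filter_upwards [f.continuous.continuousAt.eventually (lt_mem_nhds h)] with y hy
    constructor <;> intro h' <;> linarith

lemma topb_loc {x} (h : x ∈ Vs) : ∀ᶠ y in nhds x, topb y = topb x := by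
  filter_upwards [pos_locconst (V_bX h)] with y hy
  simp only [topb, hy]

lemma cco_loc (x) (hu : x ∈ Us) (h : x ∈ Vs) : ∀ᶠ y in nhds x, cco y = cco x := by
  filter_upwards [topb_loc h, pos_locconst (UV_eX hu h)] with y hy hy2
  simp only [cco, hy, hy2]

/-- the lifting data for a map of the plane to `X` -/
structure LD (φ : C(ℝ × ℝ, X)) where
  gU : ℝ × ℝ → Gp
  gV : ℝ × ℝ → Gp
  locU : ∀ p, φ p ∈ Us → ∀ᶠ q in nhds p, gU q = gU p
  locV : ∀ p, φ p ∈ Vs → ∀ᶠ q in nhds p, gV q = gV p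
  rel : ∀ p, φ p ∈ Us → φ p ∈ Vs → gU p = cco (φ p) * gV p

lemma LD_ex (φ : C(ℝ × ℝ, X)) : Nonempty (LD φ) := by
  let _ : TopologicalSpace Gp := ⊥
  have : DiscreteTopology Gp := ⟨rfl⟩
  obtain ⟨gU, gV, h1, h2, h3⟩ := lift_cocycle Us Vs Us_open Vs_open UV_cover cco cco_loc φ
  exact ⟨⟨gU, gV, h1, h2, h3⟩⟩

open Classical in
/-- the map to the tree -/
noncomputable def tauv (x : X) (gU gV : Gp) : Wd → ℝ :=
  if 0 < mX x then ed gV (topb x, true) (1/2 + 2 * eX x) else vert gU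

lemma s_range {x} (h : x ∈ Vs) : 0 < 1/2 + 2 * eX x ∧ 1/2 + 2 * eX x < 1 := by
  have h1 := V_mX h
  have h2 : 0 < mX x := h
  have := abs_lt.1 (show |eX x| < 1/4 by linarith)
  constructor <;> linarith

lemma Tr_tauv (x gU gV) : Tr (tauv x gU gV) := by
  unfold tauv
  split_ifs with h
  · have := s_range h
    exact Tr_ed _ _ this.1.le this.2.le
  · exact Tr_vert _

lemma psi_tauv (x gU gV) : psi (tauv x gU gV) = Rh (1, x) := by
  unfold tauv
  obtain ⟨p, hp, rfl⟩ := toX_surj x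
  rw [Rh_toX 1 hp]
  split_ifs with h
  · have hs := s_range h
    rw [psi_ed _ _ hs.1 hs.2]
    obtain ⟨h1, h2, h3, h4, h5⟩ := V_coord hp h
    have ec : cl (2 * p.1 - 1/2) = 2 * p.1 - 1/2 := by
      unfold cl; rw [min_eq_right (by linarith), max_eq_right (by linarith)]
    have ec2 : (1:ℝ)/2 + 2 * (p.1 - 1/2) = 2 * p.1 - 1/2 := by ring
    unfold arcP
    rw [h4, ec2, ec]
    congr 1
    ext
    · simp only [rhoF, Set.Icc.coe_one, sub_self, zero_mul, one_mul, zero_add, ec]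
    · simp only [rhoF, Set.Icc.coe_one, sub_self, zero_mul, one_mul, zero_add, ec]
      rcases h5 with ⟨h5, h6⟩ | ⟨h5, h6⟩
      · have e : hh p.2 = 5/8 := by
          unfold hh; rw [min_eq_left (by linarith), max_eq_right (by linarith)]
        rw [e]
        simp only [topb, h5, decide_true, if_true]
        ring
      · have e : hh p.2 = -(5/8) := by
          unfold hh; rw [min_eq_right (by linarith), max_eq_left (by linarith)]
        rw [e]
        simp [topb, not_lt.2 h5.le]
        ring
  · rw [psi_vert]
    rw [mX_toX hp, lt_max_iff] at h
    have h1 : 1/4 ≤ |p.1 - 1/2| := by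
      by_contra hc
      exact h (Or.inr (by linarith))
    rw [le_abs] at h1
    rcases h1 with h1 | h1
    · have ec : cl (2 * p.1 - 1/2) = 1 := by
        unfold cl; rw [min_eq_left (by linarith), max_eq_right (by linarith)]
      have e3 : mm 1 = 0 := by unfold mm; norm_num
      have := toX_glue (y := 0) (by norm_num) (by norm_num)
      rw [neg_zero] at this
      simp only [rhoF, Set.Icc.coe_one, sub_self, zero_mul, one_mul, zero_add, ec, e3, p0, this]
    · have ec : cl (2 * p.1 - 1/2) = 0 := by
        unfold cl; rw [min_eq_right (by linarith), max_eq_left (by linarith)]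
      have e3 : mm 0 = 0 := by unfold mm; norm_num
      simp only [rhoF, Set.Icc.coe_one, sub_self, zero_mul, one_mul, zero_add, ec, e3, p0]

noncomputable def LD.tau {φ} (l : LD φ) (p : ℝ × ℝ) : Wd → ℝ := tauv (φ p) (l.gU p) (l.gV p)

lemma ed_sub (g l) (s s' : ℝ) (L) : |ed g l s L - ed g l s' L| ≤ |s - s'| := by
  have : ed g l s L - ed g l s' L = (s - s') * (vert (let1 l * g) L - vert g L) := by unfold ed; ring
  rw [this, abs_mul]
  exact mul_le_of_le_one_right (abs_nonneg _) (vert_diff _ _ _)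

lemma LD.near {φ} (l : LD φ) (p : ℝ × ℝ) (h : φ p ∈ Us) (L) : |l.tau p L - vert (l.gU p) L| ≤ mX (φ p) := by
  unfold LD.tau tauv
  split_ifs with hm
  · have hr := l.rel p h hm
    have hM := V_mX hm
    have hs := s_range hm
    have he := UV_eX h hm
    rw [hr]
    unfold cco ed
    split_ifs with h0
    · rw [abs_of_pos h0] at hM
      have : (1 - (1/2 + 2 * eX (φ p))) * vert (l.gV p) L +
          (1/2 + 2 * eX (φ p)) * vert (let1 (topb (φ p), true) * l.gV p) L
          - vert (let1 (topb (φ p), true) * l.gV p) L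
          = mX (φ p) * (vert (l.gV p) L - vert (let1 (topb (φ p), true) * l.gV p) L) := by
        rw [hM]; ring
      rw [this, abs_mul, abs_of_pos hm]
      exact mul_le_of_le_one_right hm.le (vert_diff _ _ _)
    · have h1 : eX (φ p) < 0 := lt_of_le_of_ne (not_lt.1 h0) he
      rw [abs_of_neg h1] at hM
      have : (1 - (1/2 + 2 * eX (φ p))) * vert (l.gV p) L +
          (1/2 + 2 * eX (φ p)) * vert (let1 (topb (φ p), true) * l.gV p) L
          - vert (1 * l.gV p) L
          = mX (φ p) * (vert (let1 (topb (φ p), true) * l.gV p) L - vert (l.gV p) L) := by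
        rw [hM, one_mul]; ring
      rw [this, abs_mul, abs_of_pos hm]
      exact mul_le_of_le_one_right hm.le (vert_diff _ _ _)
  · rw [sub_self, abs_zero]
    obtain ⟨q, hq, e⟩ := toX_surj (φ p)
    rw [← e, mX_toX hq]; exact le_max_left _ _

lemma LD.UC {φ} (l : LD φ) : UC l.tau := by
  intro p ε hε
  by_cases hV : φ p ∈ Vs
  · have hs : ContinuousAt (fun q => 1/2 + 2 * eX (φ q)) p := by fun_prop
    filter_upwards [l.locV p hV, φ.continuous.continuousAt.eventually (topb_loc hV),
      φ.continuous.continuousAt.eventually_mem (Vs_open.mem_nhds hV),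
      Metric.continuousAt_iff'.1 hs ε hε] with q h1 h2 h3 h4 L
    unfold LD.tau tauv
    have h5 : 0 < mX (φ q) := h3
    have h6 : 0 < mX (φ p) := hV
    rw [if_pos h5, if_pos h6, h1, h2]
    exact (ed_sub _ _ _ _ _).trans_lt h4
  · have hm : ¬ 0 < mX (φ p) := hV
    have hUp : φ p ∈ Us := (UV_cover _).resolve_right hV
    have hc : ContinuousAt (fun q => mX (φ q)) p := by fun_prop
    have hlt : ∀ᶠ q in nhds p, mX (φ q) < ε :=
      hc.eventually (gt_mem_nhds (by linarith))
    filter_upwards [l.locU p hUp, φ.continuous.continuousAt.eventually_mem (Us_open.mem_nhds hUp),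
      hlt] with q h1 h2 h3 L
    have e : l.tau p = vert (l.gU p) := if_neg hm
    rw [e, ← h1]
    exact (l.near q h2 L).trans_lt h3

lemma ed_len (g l s) (L : Wd) (h : g.norm + 1 < L.length) : ed g l s L = 0 := by
  unfold ed
  have h1 := FreeGroup.norm_mul_le (let1 l) g
  have h2 := norm_let1 l
  rw [vert_len g L (by omega), vert_len _ L (by omega)]; ring

lemma cco_norm (x) : (cco x).norm ≤ 1 := by
  unfold cco
  split_ifs
  · exact norm_let1 _
  · simp

lemma LD.bound {φ} (l : LD φ) (S : Set (ℝ × ℝ)) (hS : IsCompact S) :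
    ∃ n : ℕ, ∀ p ∈ S, ∀ L : Wd, n < L.length → l.tau p L = 0 := by
  refine hS.induction_on (p := fun S => ∃ n : ℕ, ∀ p ∈ S, ∀ L : Wd, n < L.length → l.tau p L = 0)
    ⟨0, by simp⟩ ?_ ?_ ?_
  · rintro s t hst ⟨n, hn⟩
    exact ⟨n, fun p hp => hn p (hst hp)⟩
  · rintro s t ⟨n, hn⟩ ⟨m, hm⟩
    refine ⟨n + m, fun p hp L hL => ?_⟩
    rcases hp with hp | hp
    · exact hn p hp L (by omega)
    · exact hm p hp L (by omega)
  · intro p _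
    by_cases hV : φ p ∈ Vs
    · refine ⟨_, mem_nhdsWithin_of_mem_nhds (Filter.inter_mem (l.locV p hV)
        (φ.continuous.continuousAt.eventually_mem (Vs_open.mem_nhds hV))), (l.gV p).norm + 1, ?_⟩
      rintro q ⟨h1, h2⟩ L hL
      have h1 : l.gV q = l.gV p := h1
      have h2 : 0 < mX (φ q) := h2
      unfold LD.tau tauv
      rw [if_pos h2, h1]
      exact ed_len _ _ _ _ hL
    · have hUp : φ p ∈ Us := (UV_cover _).resolve_right hV
      refine ⟨_, mem_nhdsWithin_of_mem_nhds (Filter.inter_mem (l.locU p hUp)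
        (φ.continuous.continuousAt.eventually_mem (Us_open.mem_nhds hUp))), (l.gU p).norm + 2, ?_⟩
      rintro q ⟨h1, h2⟩ L hL
      have h1 : l.gU q = l.gU p := h1
      unfold LD.tau tauv
      split_ifs with hm
      · apply ed_len
        have h3 := l.rel q h2 hm
        have h4 : l.gV q = (cco (φ q))⁻¹ * l.gU q := by rw [h3]; group
        have h5 := FreeGroup.norm_mul_le (cco (φ q))⁻¹ (l.gU q)
        rw [← h4, FreeGroup.norm_inv_eq, h1] at h5
        have := cco_norm (φ q)
        omega
      · apply vert_len; rw [h1]; omega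

/-! ### Part 5: the contracting homotopy -/

noncomputable def cs (p : ℝ × ℝ) : ℝ × ℝ := (cl p.1, max (-1) (min 1 p.2))
lemma cs_cont : Continuous cs := by have := cl_cont; unfold cs; fun_prop
lemma cs_mem (p) : cs p ∈ Sq :=
  ⟨⟨cl_nonneg _, cl_le _⟩, ⟨le_max_left _ _, max_le (by norm_num) (min_le_left _ _)⟩⟩
lemma cs_id {p} (h : p ∈ Sq) : cs p = p := by
  obtain ⟨⟨a, b⟩, ⟨c, d⟩⟩ := h
  unfold cs cl
  rw [min_eq_right b, max_eq_right a, min_eq_right d, max_eq_right c]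

lemma D_of {p} (h : p ∈ Sq) (h2 : 1/4 ≤ Nf p) : p ∈ Dset := ⟨h.1, h.2, h2⟩

lemma locconst_eq {A Y : Type*} [TopologicalSpace A] {S : Set A} (hS : IsPreconnected S) (f : A → Y)
    (h : ∀ p ∈ S, ∀ᶠ q in nhdsWithin p S, f q = f p) {p q : A} (hp : p ∈ S) (hq : q ∈ S) : f p = f q := by
  let _ : TopologicalSpace Y := ⊥
  have : DiscreteTopology Y := ⟨rfl⟩
  refine hS.constant (f := f) ?_ hp hq
  intro x hx
  exact (continuousWithinAt_const (b := f x)).congr_of_eventuallyEq (h x hx) rfl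

lemma tauv_congr {x gU gV gU' gV'} (h1 : x ∈ Us → gU = gU') (h2 : x ∈ Vs → gV = gV') :
    tauv x gU gV = tauv x gU' gV' := by
  unfold tauv
  split_ifs with h
  · rw [h2 h]
  · rw [h1 ((UV_cover x).resolve_right h)]

section
variable {φ : C(ℝ × ℝ, X)} (l : LD φ)

lemma LD.constU {S : Set (ℝ × ℝ)} (hS : IsPreconnected S) {x : X} (hx : ∀ p ∈ S, φ p = x) (hU : x ∈ Us)
    {p q} (hp : p ∈ S) (hq : q ∈ S) : l.gU p = l.gU q :=
  locconst_eq hS l.gU (fun r hr => nhdsWithin_le_nhds (l.locU r (by rw [hx r hr]; exact hU))) hp hq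

lemma LD.constV {S : Set (ℝ × ℝ)} (hS : IsPreconnected S) {x : X} (hx : ∀ p ∈ S, φ p = x) (hU : x ∈ Vs)
    {p q} (hp : p ∈ S) (hq : q ∈ S) : l.gV p = l.gV q :=
  locconst_eq hS l.gV (fun r hr => nhdsWithin_le_nhds (l.locV r (by rw [hx r hr]; exact hU))) hp hq

lemma LD.tau_const {S : Set (ℝ × ℝ)} (hS : IsPreconnected S) {x : X} (hx : ∀ p ∈ S, φ p = x)
    {p q} (hp : p ∈ S) (hq : q ∈ S) : l.tau p = l.tau q := by
  unfold LD.tau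
  rw [hx p hp, hx q hq]
  exact tauv_congr (fun h => l.constU hS hx h hp hq) (fun h => l.constV hS hx h hp hq)

lemma LD.glue_tau {p1 : X} (hg : ∀ y : ℝ, -1 ≤ y → y ≤ 1 → φ (0, y) = φ (1, -y))
    (htop : ∀ a : ℝ, 0 ≤ a → a ≤ 1 → φ (a, 1) = p1) (hbot : ∀ a : ℝ, 0 ≤ a → a ≤ 1 → φ (a, -1) = p1)
    (y : ℝ) (hy : -1 ≤ y) (hy1 : y ≤ 1) : l.tau (0, y) = l.tau (1, -y) := by
  classical
  let D : ℝ → Gp := fun y => if φ (0, y) ∈ Us then (l.gU (0, y))⁻¹ * l.gU (1, -y)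
    else (l.gV (0, y))⁻¹ * l.gV (1, -y)
  have DU : ∀ y, φ (0, y) ∈ Us → D y = (l.gU (0, y))⁻¹ * l.gU (1, -y) := fun y h => if_pos h
  have DV : ∀ y ∈ Icc (-1 : ℝ) 1, φ (0, y) ∈ Vs → D y = (l.gV (0, y))⁻¹ * l.gV (1, -y) := by
    intro y hy h
    by_cases hU : φ (0, y) ∈ Us
    · have e := hg y hy.1 hy.2
      rw [DU y hU, l.rel _ hU h, l.rel (1, -y) (e ▸ hU) (e ▸ h), ← e]
      group
    · exact if_neg hU
  have t0 : ∀ y : ℝ, Filter.Tendsto (fun z : ℝ => ((0, z) : ℝ × ℝ)) (nhds y) (nhds (0, y)) :=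
    fun y => Continuous.tendsto (by fun_prop) y
  have t1 : ∀ y : ℝ, Filter.Tendsto (fun z : ℝ => ((1, -z) : ℝ × ℝ)) (nhds y) (nhds (1, -y)) :=
    fun y => Continuous.tendsto (by fun_prop) y
  have Dloc : ∀ y ∈ Icc (-1 : ℝ) 1, ∀ᶠ z in nhdsWithin y (Icc (-1) 1), D z = D y := by
    intro y hy
    have e := hg y hy.1 hy.2
    rcases UV_cover (φ (0, y)) with h | h
    · filter_upwards [nhdsWithin_le_nhds ((t0 y).eventually (l.locU _ h)),
        nhdsWithin_le_nhds ((t1 y).eventually (l.locU _ (e ▸ h))),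
        nhdsWithin_le_nhds ((t0 y).eventually
          (φ.continuous.continuousAt.eventually_mem (Us_open.mem_nhds h)))] with z h1 h2 h3
      rw [DU y h, DU z h3, h1, h2]
    · filter_upwards [nhdsWithin_le_nhds ((t0 y).eventually (l.locV _ h)),
        nhdsWithin_le_nhds ((t1 y).eventually (l.locV _ (e ▸ h))),
        nhdsWithin_le_nhds ((t0 y).eventually
          (φ.continuous.continuousAt.eventually_mem (Vs_open.mem_nhds h))),
        self_mem_nhdsWithin] with z h1 h2 h3 h4
      rw [DV y hy h, DV z h4 h3, h1, h2]
  have Dc : ∀ y ∈ Icc (-1 : ℝ) 1, ∀ z ∈ Icc (-1 : ℝ) 1, D y = D z := fun y hy z hz =>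
    locconst_eq isPreconnected_Icc D Dloc hy hz
  have m1 : (1 : ℝ) ∈ Icc (-1 : ℝ) 1 := by constructor <;> norm_num
  have m2 : (-1 : ℝ) ∈ Icc (-1 : ℝ) 1 := by constructor <;> norm_num
  have cT : IsPreconnected ((fun a : ℝ => ((a, 1) : ℝ × ℝ)) '' Icc 0 1) :=
    isPreconnected_Icc.image _ (by fun_prop)
  have cB : IsPreconnected ((fun a : ℝ => ((a, -1) : ℝ × ℝ)) '' Icc 0 1) :=
    isPreconnected_Icc.image _ (by fun_prop)
  have hT : ∀ p ∈ ((fun a : ℝ => ((a, 1) : ℝ × ℝ)) '' Icc 0 1), φ p = p1 := by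
    rintro _ ⟨a, ha, rfl⟩; exact htop a ha.1 ha.2
  have hB : ∀ p ∈ ((fun a : ℝ => ((a, -1) : ℝ × ℝ)) '' Icc 0 1), φ p = p1 := by
    rintro _ ⟨a, ha, rfl⟩; exact hbot a ha.1 ha.2
  have i0 : (0 : ℝ) ∈ Icc (0 : ℝ) 1 := by constructor <;> norm_num
  have i1 : (1 : ℝ) ∈ Icc (0 : ℝ) 1 := by constructor <;> norm_num
  have sq : D 1 * D (-1) = 1 := by
    have e1 := htop 0 le_rfl zero_le_one
    have e2 := hbot 0 le_rfl zero_le_one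
    rcases UV_cover p1 with h | h
    · rw [DU 1 (e1 ▸ h), DU (-1) (e2 ▸ h), neg_neg,
        ← l.constU cT hT h (mem_image_of_mem _ i0) (mem_image_of_mem _ i1),
        ← l.constU cB hB h (mem_image_of_mem _ i0) (mem_image_of_mem _ i1)]
      group
    · rw [DV 1 m1 (e1 ▸ h), DV (-1) m2 (e2 ▸ h), neg_neg,
        ← l.constV cT hT h (mem_image_of_mem _ i0) (mem_image_of_mem _ i1),
        ← l.constV cB hB h (mem_image_of_mem _ i0) (mem_image_of_mem _ i1)]
      group
  have D1 : D 1 = 1 := by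
    rw [← Dc 1 m1 (-1) m2, ← pow_two] at sq
    rcases pow_eq_one_iff.1 sq with h | h
    · exact h
    · norm_num at h
  have Dy : D y = 1 := by rw [Dc y ⟨hy, hy1⟩ 1 m1, D1]
  unfold LD.tau
  rw [← hg y hy hy1]
  refine tauv_congr (fun h => ?_) (fun h => ?_)
  · rw [DU y h] at Dy
    exact (inv_mul_eq_one.1 Dy)
  · rw [DV y ⟨hy, hy1⟩ h] at Dy
    exact (inv_mul_eq_one.1 Dy)

end

noncomputable def toI (s : ℝ) : unitInterval := ⟨cl s, cl_nonneg s, cl_le s⟩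
lemma toI_cont : Continuous toI := by
  have := cl_cont
  unfold toI; fun_prop
lemma toI_zero : toI 0 = 0 := by apply Subtype.ext; simp [toI, cl]
lemma toI_one : toI 1 = 1 := by apply Subtype.ext; simp [toI, cl]

noncomputable def Kv (n : ℕ) (t : ℝ) (x : X) (c : Wd → ℝ) : X :=
  if t ≤ 1/2 then Rh (toI (2 * t), x) else psi (contr (n * (2 - 2 * t)) c)

theorem main_homotopy (F : C(X, X)) (p1 p2 : X) (h1 : ∀ x, 3/4 ≤ YX x → F x = p1)
    (h2 : ∀ x, NX x ≤ 3/8 → F x = p2) :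
    ∃ K : C(unitInterval × X, X), (∀ x, K (0, x) = F x) ∧ (∀ x, K (1, x) = p0) ∧
      (∀ t x x', 3/4 ≤ YX x → 3/4 ≤ YX x' → K (t, x) = K (t, x')) ∧
      (∀ t x x', NX x ≤ 3/8 → NX x' ≤ 3/8 → K (t, x) = K (t, x')) ∧
      (∀ t x, F x ∈ C1 → K (t, x) ∉ C2) ∧ (∀ t x, F x ∈ C2 → K (t, x) ∉ C1) := by
  classical
  -- the extended map on the plane
  have hφc : Continuous (fun p : ℝ × ℝ => if 1/4 ≤ Nf (cs p) then F (toX (cs p)) else p2) := by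
    have := Nf_cont
    have := cs_cont
    refine continuous_if_le (by fun_prop) (by fun_prop) ?_ continuousOn_const ?_
    · refine F.continuous.comp_continuousOn (toX_cont.comp cs_cont.continuousOn ?_)
      intro p hp
      exact D_of (cs_mem p) hp
    · intro p hp
      have hD : cs p ∈ Dset := D_of (cs_mem p) hp.le
      apply h2
      rw [NX_toX hD, ← hp]; norm_num
  let φ : C(ℝ × ℝ, X) := ⟨_, hφc⟩
  have φD : ∀ p ∈ Dset, φ p = F (toX p) := by
    intro p hp
    change (if 1/4 ≤ Nf (cs p) then F (toX (cs p)) else p2) = _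
    rw [cs_id (Dset_sub hp), if_pos hp.2.2]
  have φtop : ∀ p ∈ Sq, 3/4 ≤ |p.2| → φ p = p1 := by
    intro p hp h
    have hD : p ∈ Dset := D_of hp (le_max_of_le_right (by linarith))
    rw [φD p hD]
    exact h1 _ (by rw [YX_toX hD]; exact h)
  have φin : ∀ p, Nf p ≤ 3/8 → φ p = p2 ∧ p ∈ Sq := by
    intro p h
    have a1 := abs_le.1 ((le_max_left _ _).trans h)
    have a2 := abs_le.1 ((le_max_right _ _).trans h)
    have hp : p ∈ Sq := ⟨⟨by linarith, by linarith⟩, ⟨by linarith, by linarith⟩⟩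
    refine ⟨?_, hp⟩
    by_cases h4 : 1/4 ≤ Nf p
    · have hD := D_of hp h4
      rw [φD p hD]
      exact h2 _ (by rw [NX_toX hD]; exact h)
    · change (if 1/4 ≤ Nf (cs p) then F (toX (cs p)) else p2) = _
      rw [cs_id hp, if_neg h4]
  obtain ⟨l⟩ := LD_ex φ
  have hSq : IsCompact Sq := isCompact_Icc.prod isCompact_Icc
  obtain ⟨n, hn⟩ := l.bound Sq hSq
  have φg : ∀ y : ℝ, -1 ≤ y → y ≤ 1 → φ (0, y) = φ (1, -y) := by
    intro y hy hy1
    have hD := Dset_edge hy hy1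
    rw [φD _ hD, φD _ (Dset_glue hD), toX_glue hy hy1]
  have τg : ∀ y : ℝ, -1 ≤ y → y ≤ 1 → l.tau (0, y) = l.tau (1, -y) := by
    refine l.glue_tau (p1 := p1) φg (fun a ha hb => φtop _ ⟨⟨ha, hb⟩, ?_⟩ ?_)
      (fun a ha hb => φtop _ ⟨⟨ha, hb⟩, ?_⟩ ?_)
    · constructor <;> norm_num
    · norm_num
    · constructor <;> norm_num
    · norm_num
  have hτT : ∀ p, Tr (l.tau p) := fun p => Tr_tauv _ _ _
  -- continuity
  have hKc : Continuous (fun q : unitInterval × (ℝ × ℝ) => Kv n q.1 (φ (cs q.2)) (l.tau (cs q.2))) := by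
    have := cs_cont
    have := toI_cont
    unfold Kv
    refine continuous_if_le (by fun_prop) (by fun_prop) ?_ ?_ ?_
    · exact Continuous.continuousOn (by fun_prop)
    · apply Continuous.continuousOn
      refine psi_cont (fun q => Tr_contr _ (hτT _)) (UC_contr ?_ (by fun_prop))
      intro z ε hε
      have ht : Filter.Tendsto (fun q : unitInterval × (ℝ × ℝ) => cs q.2) (nhds z) (nhds (cs z.2)) :=
        Continuous.tendsto (by fun_prop) z
      exact ht.eventually (l.UC (cs z.2) ε hε)
    · intro q hq
      have e1 : 2 * (q.1 : ℝ) = 1 := by linarith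
      have e2 : (n : ℝ) * (2 - 2 * (q.1 : ℝ)) = n := by rw [e1]; ring
      rw [e2, e1, toI_one, contr_big (hτT _) (hn _ (cs_mem _))]
      exact (psi_tauv _ _ _).symm
  obtain ⟨K, hK⟩ := desc (T := unitInterval)
    (fun q => Kv n q.1 (φ (cs q.2)) (l.tau (cs q.2))) hKc.continuousOn (by
      intro t y hy hy1
      have hD := Dset_edge hy hy1
      simp only
      rw [cs_id (Dset_sub hD), cs_id (Dset_sub (Dset_glue hD)), φg y hy hy1, τg y hy hy1])
  have hK' : ∀ t p, p ∈ Dset → K (t, toX p) = Kv n t (φ p) (l.tau p) := by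
    intro t p hp
    rw [hK t p hp]
    simp only [cs_id (Dset_sub hp)]
  refine ⟨K, ?_, ?_, ?_, ?_, ?_, ?_⟩
  · intro x
    obtain ⟨p, hp, rfl⟩ := toX_surj x
    rw [hK' _ p hp, φD p hp, Kv, if_pos (by simp)]
    simp [toI_zero, Rh_zero]
  · intro x
    obtain ⟨p, hp, rfl⟩ := toX_surj x
    rw [hK' _ p hp, Kv, if_neg (by norm_num)]
    have : (n : ℝ) * (2 - 2 * ((1 : unitInterval) : ℝ)) = 0 := by simp
    rw [this, psi_contr_zero (hτT p)]
  · -- constancy on the outer collar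
    have up : IsPreconnected (Icc (0 : ℝ) 1 ×ˢ Icc (3/4 : ℝ) 1) :=
      isPreconnected_Icc.prod isPreconnected_Icc
    have lo : IsPreconnected (Icc (0 : ℝ) 1 ×ˢ Icc (-1 : ℝ) (-(3/4))) :=
      isPreconnected_Icc.prod isPreconnected_Icc
    have hup : ∀ p ∈ (Icc (0 : ℝ) 1 ×ˢ Icc (3/4 : ℝ) 1), φ p = p1 := by
      rintro p ⟨ha, hb⟩
      exact φtop p ⟨ha, by linarith [hb.1], hb.2⟩ (by rw [le_abs]; left; exact hb.1)
    have hlo : ∀ p ∈ (Icc (0 : ℝ) 1 ×ˢ Icc (-1 : ℝ) (-(3/4))), φ p = p1 := by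
      rintro p ⟨ha, hb⟩
      exact φtop p ⟨ha, hb.1, by linarith [hb.2]⟩ (by rw [le_abs]; right; linarith [hb.2])
    have key : ∀ p ∈ Dset, 3/4 ≤ |p.2| → φ p = p1 ∧ l.tau p = l.tau (0, 1) := by
      intro p hp h
      rw [le_abs] at h
      rcases h with h | h
      · have hm : p ∈ (Icc (0 : ℝ) 1 ×ˢ Icc (3/4 : ℝ) 1) := ⟨hp.1, h, hp.2.1.2⟩
        refine ⟨hup p hm, l.tau_const up hup hm ?_⟩
        refine ⟨⟨?_, ?_⟩, ?_, ?_⟩ <;> norm_num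
      · have hm : p ∈ (Icc (0 : ℝ) 1 ×ˢ Icc (-1 : ℝ) (-(3/4))) := ⟨hp.1, hp.2.1.1, by linarith⟩
        refine ⟨hlo p hm, ?_⟩
        rw [τg 1 (by norm_num) le_rfl]
        refine l.tau_const lo hlo hm ?_
        refine ⟨⟨?_, ?_⟩, ?_, ?_⟩ <;> norm_num
    intro t x x' hx hx'
    obtain ⟨p, hp, rfl⟩ := toX_surj x
    obtain ⟨p', hp', rfl⟩ := toX_surj x'
    rw [YX_toX hp] at hx
    rw [YX_toX hp'] at hx'
    rw [hK' _ p hp, hK' _ p' hp', (key p hp hx).1, (key p hp hx).2, (key p' hp' hx').1,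
      (key p' hp' hx').2]
  · have hS : IsPreconnected {p : ℝ × ℝ | Nf p ≤ 3/8} := by
      have : {p : ℝ × ℝ | Nf p ≤ 3/8} = Metric.closedBall (1/2, 0) (3/8) := by
        ext p
        simp [Metric.mem_closedBall, Prod.dist_eq, Real.dist_eq, Nf]
      rw [this]
      exact (convex_closedBall _ _).isPreconnected
    intro t x x' hx hx'
    obtain ⟨p, hp, rfl⟩ := toX_surj x
    obtain ⟨p', hp', rfl⟩ := toX_surj x'
    rw [NX_toX hp] at hx
    rw [NX_toX hp'] at hx'
    rw [hK' _ p hp, hK' _ p' hp', (φin p hx).1, (φin p' hx').1,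
      l.tau_const hS (fun q hq => (φin q hq).1) hx hx']
  · intro t x hx
    obtain ⟨p, hp, rfl⟩ := toX_surj x
    rw [hK' _ p hp, φD p hp, Kv]
    split_ifs
    · exact Rh_C1 _ _ hx
    · exact psi_C2 _
  · intro t x hx
    obtain ⟨p, hp, rfl⟩ := toX_surj x
    rw [hK' _ p hp, φD p hp, Kv]
    split_ifs
    · exact Rh_C2 _ _ hx
    · exact psi_C1 _

/-! ### Part 6: the theorem -/

lemma bh_trans {f g h : C(X, X)} (h1 : BoundaryHomotopic f g) (h2 : BoundaryHomotopic g h) :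
    BoundaryHomotopic f h := by
  obtain ⟨H, hH⟩ := h1
  obtain ⟨K, hK⟩ := h2
  refine ⟨H.trans K, fun x hx t => ?_⟩
  rw [ContinuousMap.Homotopy.trans_apply]
  split_ifs
  · exact hH x hx _
  · exact hK x hx _

lemma bh_mk {f g : C(X, X)} (H : unitInterval × X → X) (hc : Continuous H) (h0 : ∀ x, H (0, x) = f x)
    (h1 : ∀ x, H (1, x) = g x) (hB : ∀ x ∈ Bd, ∀ t, H (t, x) ∈ Bd) : BoundaryHomotopic f g :=
  ⟨⟨⟨H, hc⟩, h0, h1⟩, hB⟩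

open Classical in
lemma ext_tot (C D : Set X) (h : C(unitInterval × C, D)) : ∃ k : unitInterval × X → X,
    ContinuousOn k (univ ×ˢ C) ∧ ∀ t x (hx : x ∈ C), k (t, x) = h (t, ⟨x, hx⟩) := by
  refine ⟨fun q => if hx : q.2 ∈ C then h (q.1, ⟨q.2, hx⟩) else q.2, ?_, ?_⟩
  · rw [continuousOn_iff_continuous_domRestrict]
    have : Continuous (fun q : (univ ×ˢ C : Set (unitInterval × X)) =>
        (h (q.1.1, ⟨q.1.2, q.2.2⟩) : X)) := by fun_prop
    refine this.congr fun q => ?_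
    simp [q.2.2]
  · intro t x hx
    simp [hx]

lemma sh_bh (f : C(X, X)) (hf : MapsTo f Bd Bd) :
    BoundaryHomotopic f ⟨fun x => f (Sh (1, x)), by fun_prop⟩ := by
  refine bh_mk (fun q => f (Sh q)) (by fun_prop) (fun x => by simp [Sh_zero]) (fun x => rfl) ?_
  intro x hx t
  simp only [Sh_Bd t x hx]
  exact hf hx

lemma Bd_YX {x : X} (h : x ∈ Bd) : YX x = 1 ∨ YX x ≤ 1/4 := by
  rcases h with h | h
  · left; exact (mem_C1 x).1 h
  · right; rw [← (mem_C2 x).1 h]; exact YX_le_NX x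

lemma Bd_path (γ : unitInterval → X) (hc : Continuous γ) (hB : ∀ t, γ t ∈ Bd) {a b : unitInterval}
    (ha : γ a ∈ C1) (hb : γ b ∈ C2) : False := by
  have h1 := (mem_C1 _).1 ha
  have h2 := YX_le_NX (γ b)
  rw [(mem_C2 _).1 hb] at h2
  have hc' : Continuous (fun t => YX (γ t)) := by fun_prop
  obtain ⟨t, ht⟩ := mem_range_of_exists_le_of_exists_ge hc' (c := 1/2) ⟨b, by linarith⟩ ⟨a, by linarith⟩
  simp only at ht
  rcases Bd_YX (hB t) with h | h <;> rw [ht] at h <;> norm_num at h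

lemma A1_le (x) : A1 x ≤ 1 := min_le_left _ _
lemma A2_le (x) : A2 x ≤ 1 := min_le_left _ _
lemma A1_nonneg (x) : 0 ≤ A1 x := le_min zero_le_one (by linarith [YX_le x])
lemma A2_nonneg (x) : 0 ≤ A2 x := le_min zero_le_one (by linarith [NX_ge x])
lemma A1_one {x} (h : YX x ≤ 3/4) : A1 x = 1 := min_eq_left (by linarith)
lemma A2_one {x} (h : 3/8 ≤ NX x) : A2 x = 1 := min_eq_left (by linarith)
lemma A1_C1 {x} (h : x ∈ C1) : A1 x = 0 := by
  unfold A1; rw [(mem_C1 x).1 h]; norm_num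
lemma A2_C2 {x} (h : x ∈ C2) : A2 x = 0 := by
  unfold A2; rw [(mem_C2 x).1 h]; norm_num
lemma A1_pos {x} (h : x ∉ C1) : 0 < A1 x := by
  have h1 : YX x < 1 := lt_of_le_of_ne (YX_le x) (fun e => h ((mem_C1 x).2 e))
  exact lt_min zero_lt_one (by linarith)
lemma A2_pos {x} (h : x ∉ C2) : 0 < A2 x := by
  have h1 : 1/4 < NX x := lt_of_le_of_ne (NX_ge x) (fun e => h ((mem_C2 x).2 e.symm))
  exact lt_min zero_lt_one (by linarith)

/-- make the map constant on each boundary circle -/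
lemma step_const (f : C(X, X)) (hf : MapsTo f Bd Bd) (k1 k2 : unitInterval × X → X) (b1 b2 : X)
    (c1 : ContinuousOn k1 (univ ×ˢ C1)) (c2 : ContinuousOn k2 (univ ×ˢ C2))
    (z1 : ∀ x ∈ C1, k1 (0, x) = f x) (z2 : ∀ x ∈ C2, k2 (0, x) = f x)
    (o1 : ∀ x ∈ C1, k1 (1, x) = b1) (o2 : ∀ x ∈ C2, k2 (1, x) = b2)
    (m1 : ∀ t, ∀ x ∈ C1, k1 (t, x) ∈ Bd) (m2 : ∀ t, ∀ x ∈ C2, k2 (t, x) ∈ Bd) :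
    ∃ F : C(X, X), BoundaryHomotopic f F ∧ (∀ x ∈ C1, F x = b1) ∧ (∀ x ∈ C2, F x = b2) := by
  classical
  have := A1_cont
  have := A2_cont
  have := toI_cont
  let H : unitInterval × X → X := fun q =>
    if 3/4 ≤ YX q.2 then k1 (toI (q.1 * (1 - A1 q.2)), Sh (1, q.2)) else
      if NX q.2 ≤ 3/8 then k2 (toI (q.1 * (1 - A2 q.2)), Sh (1, q.2)) else f (Sh (1, q.2))
  have hH : Continuous H := by
    refine continuous_if_le (by fun_prop) (by fun_prop) ?_ (Continuous.continuousOn ?_) ?_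
    · refine c1.comp (Continuous.continuousOn (by fun_prop)) ?_
      intro q hq
      exact ⟨mem_univ _, Sh_C1 _ hq⟩
    · refine continuous_if_le (by fun_prop) (by fun_prop) ?_ (Continuous.continuousOn (by fun_prop)) ?_
      · refine c2.comp (Continuous.continuousOn (by fun_prop)) ?_
        intro q hq
        exact ⟨mem_univ _, Sh_C2 _ hq⟩
      · intro q hq
        rw [A2_one hq.ge, sub_self, mul_zero, toI_zero]
        exact z2 _ (Sh_C2 _ hq.le)
    · intro q hq
      have := YX_le_NX q.2
      rw [if_neg (by linarith), A1_one hq.ge, sub_self, mul_zero, toI_zero]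
      exact z1 _ (Sh_C1 _ hq.le)
  have H1 : ∀ t, ∀ x ∈ C1, H (t, x) = k1 (toI t, x) := by
    intro t x hx
    have e := (mem_C1 x).1 hx
    simp only [H]
    rw [if_pos (by linarith), A1_C1 hx, Sh_Bd _ _ (Or.inl hx), sub_zero, mul_one]
  have H2 : ∀ t, ∀ x ∈ C2, H (t, x) = k2 (toI t, x) := by
    intro t x hx
    have e := (mem_C2 x).1 hx
    have := YX_le_NX x
    simp only [H]
    rw [if_neg (by linarith), if_pos (by linarith), A2_C2 hx, Sh_Bd _ _ (Or.inr hx), sub_zero, mul_one]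
  refine ⟨⟨fun x => H (1, x), by fun_prop⟩, bh_trans (sh_bh f hf) (bh_mk H hH ?_ (fun x => rfl) ?_), ?_, ?_⟩
  · intro x
    simp only [H, Set.Icc.coe_zero, zero_mul, toI_zero]
    split_ifs with h1 h2
    · exact z1 _ (Sh_C1 _ h1)
    · exact z2 _ (Sh_C2 _ h2)
    · rfl
  · intro x hx t
    rcases hx with hx | hx
    · rw [H1 t x hx]; exact m1 _ _ hx
    · rw [H2 t x hx]; exact m2 _ _ hx
  · intro x hx
    change H (1, x) = b1
    rw [H1 1 x hx, Set.Icc.coe_one, toI_one]; exact o1 x hx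
  · intro x hx
    change H (1, x) = b2
    rw [H2 1 x hx, Set.Icc.coe_one, toI_one]; exact o2 x hx

noncomputable def uu (x : X) : ℝ := (1 + A1 x - A2 x) / 2
lemma uu_cont : Continuous uu := by
  have := A1_cont
  have := A2_cont
  unfold uu; fun_prop
lemma uu_mem (x) : 0 ≤ uu x ∧ uu x ≤ 1 := by
  unfold uu
  constructor <;> linarith [A1_le x, A2_le x, A1_nonneg x, A2_nonneg x]
lemma uu_C1 {x} (h : x ∈ C1) : uu x = 0 := by
  have := YX_le_NX x
  rw [(mem_C1 x).1 h] at this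
  unfold uu; rw [A1_C1 h, A2_one (by linarith)]; norm_num
lemma uu_C2 {x} (h : x ∈ C2) : uu x = 1 := by
  have := YX_le_NX x
  rw [(mem_C2 x).1 h] at this
  unfold uu; rw [A2_C2 h, A1_one (by linarith)]; norm_num
lemma uu_pos {x} (h : x ∉ C1) : 0 < uu x := by
  unfold uu; linarith [A1_pos h, A2_le x]
lemma uu_lt {x} (h : x ∉ C2) : uu x < 1 := by
  unfold uu; linarith [A2_pos h, A1_le x]

lemma c1_ex : ∃ x, x ∈ C1 := by
  have hD := Dset_edge (y := 1) (by norm_num) (by norm_num)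
  exact ⟨toX (0, 1), by rw [mem_C1, YX_toX hD]; simp⟩
lemma c2_ex : ∃ x, x ∈ C2 := by
  have hN : Nf (1/4, 0) = 1/4 := by
    unfold Nf; norm_num [abs_of_pos, abs_of_neg]
  have hD : ((1/4, 0) : ℝ × ℝ) ∈ Dset := by
    refine ⟨⟨?_, ?_⟩, ⟨?_, ?_⟩, hN.ge⟩ <;> norm_num
  exact ⟨toX (1/4, 0), by rw [mem_C2, NX_toX hD, hN]⟩

/-- final reparametrisation -/
lemma final_step (γ : ℝ → X) (hγ : Continuous γ) (h0 : γ 0 ∈ Bd) (h1 : γ 1 ∈ Bd)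
    (h : (∀ v, γ v ∉ C2) ∨ (∀ v, γ v ∉ C1)) :
    ∃ g : C(X, X), BoundaryHomotopic ⟨fun x => γ (uu x), hγ.comp uu_cont⟩ g ∧
      ∃ x₀ : X, {x : X | g x = x} = {x₀} := by
  have := uu_cont
  have := cl_cont
  have gen : ∀ χ : ℝ → ℝ, Continuous χ → χ 0 = 0 → χ 1 = 1 →
      ∃ g : C(X, X), BoundaryHomotopic ⟨fun x => γ (uu x), hγ.comp uu_cont⟩ g ∧ ∀ x, g x = γ (χ (uu x)) := by
    intro χ hχ e0 e1
    refine ⟨⟨fun x => γ (χ (uu x)), by fun_prop⟩,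
      bh_mk (fun q => γ ((1 - q.1) * uu q.2 + q.1 * χ (uu q.2))) (by fun_prop) ?_ ?_ ?_, fun x => rfl⟩
    · intro x; simp
    · intro x; simp
    · intro x hx t
      rcases hx with hx | hx
      · simp only [uu_C1 hx, e0, mul_zero, add_zero]; exact h0
      · simp only [uu_C2 hx, e1, mul_one, sub_add_cancel]; exact h1
  have hcu : Continuous (fun v => uu (γ v)) := by fun_prop
  rcases h with h | h
  · obtain ⟨v0, -, hv0⟩ := (isCompact_Icc (a := (0:ℝ)) (b := 1)).exists_isMaxOn
      ⟨0, by simp⟩ hcu.continuousOn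
    have hlt := uu_lt (h v0)
    have hge := (uu_mem (γ v0)).1
    set ε := 1 - uu (γ v0) with hε
    have εp : 0 < ε := by linarith
    obtain ⟨g, hg, hgx⟩ := gen (fun v => cl ((v - (1 - ε)) / ε)) (by fun_prop)
      (by
        have : (0 - (1 - ε)) / ε ≤ 0 := div_nonpos_of_nonpos_of_nonneg (by linarith) εp.le
        unfold cl; exact max_eq_left (min_le_of_right_le this))
      (by
        have : (1 - (1 - ε)) / ε = 1 := by rw [sub_sub_cancel]; exact div_self εp.ne'
        rw [this]; simp [cl])
    have key : ∀ v ∈ Icc (0:ℝ) 1, g (γ v) = γ 0 := by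
      intro v hv
      rw [hgx]
      congr 1
      have h3 : uu (γ v) ≤ uu (γ v0) := hv0 hv
      have : (uu (γ v) - (1 - ε)) / ε ≤ 0 := div_nonpos_of_nonpos_of_nonneg (by linarith) εp.le
      unfold cl; exact max_eq_left (min_le_of_right_le this)
    refine ⟨g, hg, γ 0, ?_⟩
    ext x
    simp only [mem_ofPred_eq, mem_singleton_iff]
    constructor
    · intro hx
      have e := hgx x
      rw [hx] at e
      have k := key (cl ((uu x - (1 - ε)) / ε)) ⟨cl_nonneg _, cl_le _⟩
      rw [← e] at k
      exact hx.symm.trans k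
    · rintro rfl
      exact key 0 (by simp)
  · obtain ⟨v0, -, hv0⟩ := (isCompact_Icc (a := (0:ℝ)) (b := 1)).exists_isMinOn
      ⟨0, by simp⟩ hcu.continuousOn
    have εp := uu_pos (h v0)
    have hle := (uu_mem (γ v0)).2
    set ε := uu (γ v0) with hε
    have one : ∀ v, ε ≤ v → cl (v / ε) = 1 := by
      intro v hv
      have : 1 ≤ v / ε := by rw [le_div_iff₀ εp]; linarith
      unfold cl; rw [min_eq_left this]; simp
    obtain ⟨g, hg, hgx⟩ := gen (fun v => cl (v / ε)) (by fun_prop) (by simp [cl]) (one 1 hle)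
    have key : ∀ v ∈ Icc (0:ℝ) 1, g (γ v) = γ 1 := by
      intro v hv
      rw [hgx]
      congr 1
      exact one _ (hv0 hv)
    refine ⟨g, hg, γ 1, ?_⟩
    ext x
    simp only [mem_ofPred_eq, mem_singleton_iff]
    constructor
    · intro hx
      have e := hgx x
      rw [hx] at e
      have k := key (cl (uu x / ε)) ⟨cl_nonneg _, cl_le _⟩
      rw [← e] at k
      exact hx.symm.trans k
    · rintro rfl
      exact key 1 (by simp)

/-- from a map constant on the collars to the conclusion -/
lemma collar_step (F : C(X, X)) (b1 b2 : X) (h1 : ∀ x, 3/4 ≤ YX x → F x = b1)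
    (h2 : ∀ x, NX x ≤ 3/8 → F x = b2) (hb : (b1 ∈ C1 ∧ b2 ∈ C1) ∨ (b1 ∈ C2 ∧ b2 ∈ C2)) :
    ∃ g : C(X, X), BoundaryHomotopic F g ∧ ∃ x₀ : X, {x : X | g x = x} = {x₀} := by
  have := toI_cont
  have := A1_cont
  have := A2_cont
  obtain ⟨K, K0, K1, KY, KN, KC1, KC2⟩ := main_homotopy F b1 b2 h1 h2
  obtain ⟨c1, hc1⟩ := c1_ex
  obtain ⟨c2, hc2⟩ := c2_ex
  have hY : 3/4 ≤ YX c1 := by rw [(mem_C1 c1).1 hc1]; norm_num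
  have hN : NX c2 ≤ 3/8 := by rw [(mem_C2 c2).1 hc2]; norm_num
  let γ : ℝ → X := fun v => if v ≤ 1/2 then K (toI (2 * v), c1) else K (toI (2 - 2 * v), c2)
  have hmid : ∀ v : ℝ, v = 1/2 → K (toI (2 * v), c1) = K (toI (2 - 2 * v), c2) := by
    rintro v rfl
    have e1 : (2 : ℝ) * (1/2) = 1 := by norm_num
    have e2 : (2 : ℝ) - 1 = 1 := by norm_num
    rw [e1, e2, toI_one, K1, K1]
  have hγ : Continuous γ := by
    refine continuous_if_le (by fun_prop) (by fun_prop) (Continuous.continuousOn (by fun_prop))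
      (Continuous.continuousOn (by fun_prop)) hmid
  have γlo : ∀ v, v ≤ 1/2 → γ v = K (toI (2 * v), c1) := fun v h => if_pos h
  have γhi : ∀ v, 1/2 ≤ v → γ v = K (toI (2 - 2 * v), c2) := by
    intro v h
    rcases h.eq_or_lt with h | h
    · rw [γlo v h.ge, hmid v h.symm]
    · exact if_neg (not_le.2 h)
  have g0 : γ 0 = b1 := by
    rw [γlo 0 (by norm_num), mul_zero, toI_zero, K0, h1 _ hY]
  have g1 : γ 1 = b2 := by
    rw [γhi 1 (by norm_num), mul_one, sub_self, toI_zero, K0, h2 _ hN]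
  have hbB : b1 ∈ Bd ∧ b2 ∈ Bd := by
    rcases hb with h | h
    · exact ⟨Or.inl h.1, Or.inl h.2⟩
    · exact ⟨Or.inr h.1, Or.inr h.2⟩
  have step1 : BoundaryHomotopic F ⟨fun x => γ (uu x), hγ.comp uu_cont⟩ := by
    refine bh_mk (fun q => K (toI (q.1 * min (A1 q.2) (A2 q.2)), q.2)) (by fun_prop) ?_ ?_ ?_
    · intro x
      simp only [Set.Icc.coe_zero, zero_mul, toI_zero, K0]
    · intro x
      simp only [Set.Icc.coe_one, one_mul, ContinuousMap.coe_mk]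
      by_cases hx1 : 3/4 ≤ YX x
      · have e2 : A2 x = 1 := A2_one (by linarith [YX_le_NX x])
        have e : uu x = A1 x / 2 := by unfold uu; rw [e2]; ring
        rw [γlo _ (by rw [e]; linarith [A1_le x]), e2, min_eq_left (A1_le x), KY _ x c1 hx1 hY, e,
          mul_div_cancel₀ _ (two_ne_zero)]
      · have e1 : A1 x = 1 := A1_one (not_le.1 hx1).le
        by_cases hx2 : NX x ≤ 3/8
        · have e : uu x = 1 - A2 x / 2 := by unfold uu; rw [e1]; ring
          have e' : 2 - 2 * (1 - A2 x / 2) = A2 x := by ring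
          rw [γhi _ (by rw [e]; linarith [A2_le x]), e1, min_eq_right (A2_le x), KN _ x c2 hx2 hN, e, e']
        · have e2 : A2 x = 1 := A2_one (not_le.1 hx2).le
          have e : uu x = 1/2 := by unfold uu; rw [e1, e2]; norm_num
          have e3 : (2 : ℝ) * (1/2) = 1 := by norm_num
          rw [γlo _ e.le, e, e1, e2, min_self, e3, toI_one, K1, K1]
    · intro x hx t
      have em : min (A1 x) (A2 x) = 0 := by
        rcases hx with hx | hx
        · rw [A1_C1 hx]; exact min_eq_left (A2_nonneg x)
        · rw [A2_C2 hx]; exact min_eq_right (A1_nonneg x)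
      simp only [em, mul_zero, toI_zero, K0]
      rcases hx with hx | hx
      · rw [h1 _ (by rw [(mem_C1 x).1 hx]; norm_num)]; exact hbB.1
      · rw [h2 _ (by rw [(mem_C2 x).1 hx]; norm_num)]; exact hbB.2
  obtain ⟨g, hg, hfix⟩ := final_step γ hγ (g0 ▸ hbB.1) (g1 ▸ hbB.2) (by
    rcases hb with ⟨ha, hb⟩ | ⟨ha, hb⟩
    · left
      intro v
      rcases le_total v (1/2) with h | h
      · rw [γlo v h]; exact KC1 _ _ (by rw [h1 _ hY]; exact ha)
      · rw [γhi v h]; exact KC1 _ _ (by rw [h2 _ hN]; exact hb)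
    · right
      intro v
      rcases le_total v (1/2) with h | h
      · rw [γlo v h]; exact KC2 _ _ (by rw [h1 _ hY]; exact ha)
      · rw [γhi v h]; exact KC2 _ _ (by rw [h2 _ hN]; exact hb))
  exact ⟨g, bh_trans step1 hg, hfix⟩

/-- A boundary-inessential boundary-preserving map of the punctured Möbius band whose
image of the boundary lies in a single boundary circle is boundary-homotopic to a map
with exactly one fixed point. -/
theorem stmt_5 (f : C(X, X)) (hf : BoundaryPreserving f)
    (h1 : Inessential (restrictMap f (hf.mono_left Set.subset_union_left : MapsTo f C1 Bd)))
    (h2 : Inessential (restrictMap f (hf.mono_left Set.subset_union_right : MapsTo f C2 Bd)))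
    (him : MapsTo f Bd C1 ∨ MapsTo f Bd C2) :
    ∃ g : C(X, X), BoundaryHomotopic f g ∧ ∃ x₀ : X, {x : X | g x = x} = {x₀} := by
  obtain ⟨b1, ⟨H1⟩⟩ := h1
  obtain ⟨b2, ⟨H2⟩⟩ := h2
  obtain ⟨k1, kc1, hk1⟩ := ext_tot C1 Bd H1.toContinuousMap
  obtain ⟨k2, kc2, hk2⟩ := ext_tot C2 Bd H2.toContinuousMap
  have e10 : ∀ x ∈ C1, k1 (0, x) = f x := by
    intro x hx; rw [hk1 0 x hx]
    exact congrArg Subtype.val (H1.apply_zero ⟨x, hx⟩)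
  have e20 : ∀ x ∈ C2, k2 (0, x) = f x := by
    intro x hx; rw [hk2 0 x hx]
    exact congrArg Subtype.val (H2.apply_zero ⟨x, hx⟩)
  have e11 : ∀ x ∈ C1, k1 (1, x) = b1 := by
    intro x hx; rw [hk1 1 x hx]
    exact congrArg Subtype.val (H1.apply_one ⟨x, hx⟩)
  have e21 : ∀ x ∈ C2, k2 (1, x) = b2 := by
    intro x hx; rw [hk2 1 x hx]
    exact congrArg Subtype.val (H2.apply_one ⟨x, hx⟩)
  have m1 : ∀ t, ∀ x ∈ C1, k1 (t, x) ∈ Bd := by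
    intro t x hx; rw [hk1 t x hx]; exact Subtype.property _
  have m2 : ∀ t, ∀ x ∈ C2, k2 (t, x) ∈ Bd := by
    intro t x hx; rw [hk2 t x hx]; exact Subtype.property _
  obtain ⟨F0, hF0, F1, F2⟩ := step_const f hf k1 k2 b1 b2 kc1 kc2 e10 e20 e11 e21 m1 m2
  have hF0B : MapsTo F0 Bd Bd := by
    rintro x (hx | hx)
    · rw [F1 x hx]; exact b1.2
    · rw [F2 x hx]; exact b2.2
  have hb : ((b1 : X) ∈ C1 ∧ (b2 : X) ∈ C1) ∨ ((b1 : X) ∈ C2 ∧ (b2 : X) ∈ C2) := by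
    obtain ⟨c1, hc1⟩ := c1_ex
    obtain ⟨c2, hc2⟩ := c2_ex
    have p1 : Continuous (fun t => k1 (t, c1)) :=
      kc1.comp_continuous (by fun_prop) (fun t => ⟨mem_univ _, hc1⟩)
    have p2 : Continuous (fun t => k2 (t, c2)) :=
      kc2.comp_continuous (by fun_prop) (fun t => ⟨mem_univ _, hc2⟩)
    have q1 : ∀ {a b : unitInterval}, k1 (a, c1) ∈ C1 → k1 (b, c1) ∈ C2 → False :=
      fun ha hb => Bd_path _ p1 (fun t => m1 t c1 hc1) ha hb
    have q2 : ∀ {a b : unitInterval}, k2 (a, c2) ∈ C1 → k2 (b, c2) ∈ C2 → False :=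
      fun ha hb => Bd_path _ p2 (fun t => m2 t c2 hc2) ha hb
    rcases him with h | h
    · left
      constructor
      · refine b1.2.resolve_right fun hn => q1 (a := 0) (b := 1) ?_ ?_
        · rw [e10 c1 hc1]; exact h (Or.inl hc1)
        · rw [e11 c1 hc1]; exact hn
      · refine b2.2.resolve_right fun hn => q2 (a := 0) (b := 1) ?_ ?_
        · rw [e20 c2 hc2]; exact h (Or.inr hc2)
        · rw [e21 c2 hc2]; exact hn
    · right
      constructor
      · refine b1.2.resolve_left fun hn => q1 (a := 1) (b := 0) ?_ ?_
        · rw [e11 c1 hc1]; exact hn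
        · rw [e10 c1 hc1]; exact h (Or.inl hc1)
      · refine b2.2.resolve_left fun hn => q2 (a := 1) (b := 0) ?_ ?_
        · rw [e21 c2 hc2]; exact hn
        · rw [e20 c2 hc2]; exact h (Or.inr hc2)
  obtain ⟨g, hg, hfix⟩ := collar_step ⟨fun x => F0 (Sh (1, x)), by fun_prop⟩ b1 b2
    (fun x hx => F1 _ (Sh_C1 x hx)) (fun x hx => F2 _ (Sh_C2 x hx)) hb
  exact ⟨g, bh_trans hF0 (bh_trans (sh_bh F0 hF0B) hg), hfix⟩

end PMB
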